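/- arXiv:2406.07311 — 4 statements merged into one kernel-verified Lean document; each statement's English description precedes it below -/
import Mathlib

section
/- Let n ≥ 3 and let λ be a partition of n. Then both Σ_{π ∈ C_λ} occ₍₂₃₁₎(π) and Σ_{π ∈ C_λ} occ₍₃₁₂₎(π) are equal to |C_λ| · ( (n−2)/6 − X₁/(2n) − X₂/(2n(n−1)) + X₃/(2n(n−1)) − X₄/(2n(n−1)) ), where occ₍₂₃₁₎(π) = #{i : 1 ≤ i ≤ n−2, π(i+2) < π(i) < π(i+1)} and occ₍₃₁₂₎(π) = #{i : 1 ≤ i ≤ n−2, π(i+1) < π(i+2) < π(i)} count occurrences of the consecutive (vincular) patterns (231) and (312) in π. -/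
open Equiv Finset

/-- The conjugacy class of permutations of `Fin n` with cycle type `lam`
(cycle type includes fixed points as parts of size 1, via `Equiv.Perm.partition`). -/
def conjClass (n : ℕ) (lam : n.Partition) : Finset (Equiv.Perm (Fin n)) :=
  Finset.univ.filter fun π => (Equiv.Perm.partition π).parts = lam.parts

theorem s14_cyc {n : ℕ} (π : Perm (Fin n)) (k : ℕ) (hk : k.Prime) :
    #{x | π x ≠ x ∧ (π ^ k) x = x} = k * (Equiv.Perm.partition π).parts.count k := by
  have hk2 := hk.two_le
  have h1 : (Equiv.Perm.partition π).parts.count k = #{c ∈ π.cycleFactorsFinset | #c.support = k} := by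
    rw [Perm.parts_partition, Multiset.count_add, Multiset.count_replicate, if_neg (by omega),
      add_zero, Perm.cycleType_def, Multiset.count_map]
    rw [Finset.card_def, Finset.filter_val]
    simp [eq_comm]
  rw [h1]
  have h2 : ({x | π x ≠ x ∧ (π ^ k) x = x} : Finset (Fin n)) =
      ({c ∈ π.cycleFactorsFinset | #c.support = k} : Finset _).biUnion fun c => c.support := by
    ext x
    simp only [mem_filter, mem_univ, true_and, mem_biUnion]
    constructor
    · rintro ⟨hx, hx2⟩
      refine ⟨π.cycleOf x, ⟨Perm.cycleOf_mem_cycleFactorsFinset_iff.2 (by simpa using hx), ?_⟩, ?_⟩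
      · have hc := Perm.isCycle_cycleOf π hx
        rw [← hc.orderOf]
        have := Fact.mk hk
        rw [orderOf_eq_prime_iff]
        refine ⟨?_, hc.ne_one⟩
        rw [hc.pow_eq_one_iff]
        exact ⟨x, by simpa using hx, by simpa using hx2⟩
      · simpa using hx
    · rintro ⟨c, ⟨hc, hck⟩, hx⟩
      have hcc := (Perm.mem_cycleFactorsFinset_iff.1 hc).1
      have he := Perm.cycle_is_cycleOf hx hc
      have hx' : π x ≠ x := by
        have := Perm.mem_cycleFactorsFinset_support_le hc hx
        simpa using this
      refine ⟨hx', ?_⟩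
      have h3 : (c ^ k) = 1 := by rw [← hck, ← hcc.orderOf, pow_orderOf_eq_one]
      have h4 := Perm.cycleOf_pow_apply_self π x k
      rw [← h4, ← he, h3]; rfl
  rw [h2, card_biUnion]
  · rw [Finset.sum_congr rfl (g := fun _ => k) (by intro x hx; exact (mem_filter.1 hx).2)]
    simp [mul_comm]
  · intro c hc d hd hcd
    have := Perm.cycleFactorsFinset_pairwise_disjoint π (mem_filter.1 hc).1 (mem_filter.1 hd).1 hcd
    exact Perm.disjoint_iff_disjoint_support.1 this

theorem s14_fix {n : ℕ} (π : Perm (Fin n)) :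
    #{x | π x = x} = (Equiv.Perm.partition π).parts.count 1 := by
  rw [Perm.parts_partition, Multiset.count_add, Multiset.count_replicate, if_pos rfl]
  rw [Multiset.count_eq_zero.2, zero_add]
  · have : π.support = ({x | ¬ π x = x} : Finset (Fin n)) := by ext; simp
    rw [this]
    have h := Finset.card_filter_add_card_filter_not (s := (univ : Finset (Fin n))) (fun x => π x = x)
    simp at h ⊢
    omega
  · intro h
    have := Perm.two_le_of_mem_cycleType h
    omega

theorem s14_const {n k : ℕ} (F : (Fin k → Fin n) → ℚ)
    (hF : ∀ (σ : Perm (Fin n)) e, F (fun i => σ (e i)) = F e) :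
    ∃ κ : ℚ, ∀ e, Function.Injective e → F e = κ := by
  by_cases h : ∃ e : Fin k → Fin n, Function.Injective e
  · obtain ⟨e0, h0⟩ := h
    refine ⟨F e0, fun e he => ?_⟩
    obtain ⟨σ, hσ⟩ := (Equiv.Perm.isMultiplyPretransitive (Fin n) k).exists_smul_eq ⟨e0, h0⟩ ⟨e, he⟩
    rw [← hF σ e0]
    congr 1
    ext i
    have := DFunLike.congr_fun hσ i
    exact congrArg _ this.symm
  · exact ⟨0, fun e he => (h ⟨e, he⟩).elim⟩

def s14N {n : ℕ} (C : Finset (Perm (Fin n))) (a b c x y z : Fin n) : ℚ :=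
  (#{π ∈ C | π a = x ∧ π b = y ∧ π c = z} : ℚ)

theorem s14N_conj {n : ℕ} (C : Finset (Perm (Fin n)))
    (hC : ∀ σ π : Perm (Fin n), π ∈ C → σ * π * σ⁻¹ ∈ C)
    (σ : Perm (Fin n)) (a b c x y z : Fin n) :
    s14N C (σ a) (σ b) (σ c) (σ x) (σ y) (σ z) = s14N C a b c x y z := by
  unfold s14N
  congr 1
  symm
  refine Finset.card_bij' (fun π _ => σ * π * σ⁻¹) (fun π _ => σ⁻¹ * π * σ) ?_ ?_ ?_ ?_
  · intro π; simp only [mem_filter]; rintro ⟨h, h1, h2, h3⟩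
    exact ⟨hC _ _ h, by simp [h1], by simp [h2], by simp [h3]⟩
  · intro π; simp only [mem_filter]; rintro ⟨h, h1, h2, h3⟩
    exact ⟨by simpa using hC σ⁻¹ _ h, by simp [h1], by simp [h2], by simp [h3]⟩
  · intro π _; simp [mul_assoc]
  · intro π _; simp [mul_assoc]

theorem s14N_swap12 {n : ℕ} (C : Finset (Perm (Fin n))) (a b c x y z : Fin n) :
    s14N C a b c x y z = s14N C b a c y x z := by
  unfold s14N; congr 3; ext; tauto

theorem s14N_swap23 {n : ℕ} (C : Finset (Perm (Fin n))) (a b c x y z : Fin n) :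
    s14N C a b c x y z = s14N C a c b x z y := by
  unfold s14N; congr 3; ext; tauto

theorem s14_c6 {n : ℕ} (C : Finset (Perm (Fin n)))
    (hC : ∀ σ π : Perm (Fin n), π ∈ C → σ * π * σ⁻¹ ∈ C) (k : ℕ) (i1 i2 i3 j1 j2 j3 : Fin k) :
    ∃ κ : ℚ, ∀ e : Fin k → Fin n, Function.Injective e →
      s14N C (e i1) (e i2) (e i3) (e j1) (e j2) (e j3) = κ :=
  s14_const (fun e => s14N C (e i1) (e i2) (e i3) (e j1) (e j2) (e j3))
    (fun σ _ => s14N_conj C hC σ _ _ _ _ _ _)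

def s14K {n : ℕ} (C : Finset (Perm (Fin n))) (n0 nf nm nff nfm np ns fff fsw cyc : ℚ) : Prop :=
  ∀ a b c : Fin n, a ≠ b → a ≠ c → b ≠ c →
      (s14N C a b c a b c = fff ∧ s14N C a b c a c b = fsw ∧ s14N C a b c b c a = cyc) ∧
      ∀ x : Fin n, x ≠ a → x ≠ b → x ≠ c →
      (s14N C a b c a b x = nff ∧ s14N C a b c a c x = nfm ∧ s14N C a b c b c x = np ∧
        s14N C a b c b a x = ns) ∧
      ∀ y : Fin n, y ≠ a → y ≠ b → y ≠ c → x ≠ y →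
      (s14N C a b c a x y = nf ∧ s14N C a b c b x y = nm) ∧
      ∀ z : Fin n, z ≠ a → z ≠ b → z ≠ c → x ≠ z → y ≠ z →
      s14N C a b c x y z = n0

/-- existence of all pattern constants -/
theorem s14_consts {n : ℕ} (C : Finset (Perm (Fin n)))
    (hC : ∀ σ π : Perm (Fin n), π ∈ C → σ * π * σ⁻¹ ∈ C) :
    ∃ n0 nf nm nff nfm np ns fff fsw cyc : ℚ, s14K C n0 nf nm nff nfm np ns fff fsw cyc := by
  obtain ⟨n0, h0⟩ := s14_c6 C hC 6 0 1 2 3 4 5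
  obtain ⟨nf, h1⟩ := s14_c6 C hC 5 0 1 2 0 3 4
  obtain ⟨nm, h2⟩ := s14_c6 C hC 5 0 1 2 1 3 4
  obtain ⟨nff, h3⟩ := s14_c6 C hC 4 0 1 2 0 1 3
  obtain ⟨nfm, h4⟩ := s14_c6 C hC 4 0 1 2 0 2 3
  obtain ⟨np, h5⟩ := s14_c6 C hC 4 0 1 2 1 2 3
  obtain ⟨ns, h6⟩ := s14_c6 C hC 4 0 1 2 1 0 3
  obtain ⟨fff, h7⟩ := s14_c6 C hC 3 0 1 2 0 1 2
  obtain ⟨fsw, h8⟩ := s14_c6 C hC 3 0 1 2 0 2 1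
  obtain ⟨cyc, h9⟩ := s14_c6 C hC 3 0 1 2 1 2 0
  refine ⟨n0, nf, nm, nff, nfm, np, ns, fff, fsw, cyc, fun a b c hab hac hbc => ⟨?_, fun x xa xb xc => ⟨?_, fun y ya yb yc xy => ⟨?_, fun z za zb zc xz yz => ?_⟩⟩⟩⟩
  · have hi : Function.Injective ![a, b, c] := by
      intro i j; fin_cases i <;> fin_cases j <;> simp [*, Ne.symm]
    exact ⟨h7 _ hi, h8 _ hi, h9 _ hi⟩
  · have hi : Function.Injective ![a, b, c, x] := by
      simp [Function.Injective, Fin.forall_fin_succ]; grind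
    exact ⟨h3 _ hi, h4 _ hi, h5 _ hi, h6 _ hi⟩
  · have hi : Function.Injective ![a, b, c, x, y] := by
      simp [Function.Injective, Fin.forall_fin_succ]; grind
    exact ⟨h1 _ hi, h2 _ hi⟩
  · have hi : Function.Injective ![a, b, c, x, y, z] := by
      simp [Function.Injective, Fin.forall_fin_succ]; grind
    exact h0 _ hi

theorem s14_facts0 {n : ℕ} (C : Finset (Perm (Fin n))) {n0 nf nm nff nfm np ns fff fsw cyc : ℚ}
    (K : s14K C n0 nf nm nff nfm np ns fff fsw cyc) (a b c : Fin n) (hab : a ≠ b) (hac : a ≠ c) (hbc : b ≠ c) :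
    s14N C a b c a b c = fff ∧
    s14N C a b c a c b = fsw ∧
    s14N C a b c b a c = fsw ∧
    s14N C a b c b c a = cyc ∧
    s14N C a b c c a b = cyc ∧
    s14N C a b c c b a = fsw := by
  refine ⟨?_, ?_, ?_, ?_, ?_, ?_⟩
  · exact (K a b c hab hac hbc).1.1
  · exact (K a b c hab hac hbc).1.2.1
  · rw [s14N_swap23, s14N_swap12]; exact (K c a b hac.symm hbc.symm hab).1.2.1
  · exact (K a b c hab hac hbc).1.2.2
  · rw [s14N_swap12]; exact (K b a c hab.symm hbc hac).1.2.2
  · rw [s14N_swap12]; exact (K b a c hab.symm hbc hac).1.2.1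

theorem s14_facts1 {n : ℕ} (C : Finset (Perm (Fin n))) {n0 nf nm nff nfm np ns fff fsw cyc : ℚ}
    (K : s14K C n0 nf nm nff nfm np ns fff fsw cyc) (a b c : Fin n) (hab : a ≠ b) (hac : a ≠ c) (hbc : b ≠ c)
    (x : Fin n) (xa : x ≠ a) (xb : x ≠ b) (xc : x ≠ c) :
    s14N C a b c a b x = nff ∧
    s14N C a b c a c x = nfm ∧
    s14N C a b c a x b = nfm ∧
    s14N C a b c a x c = nff ∧
    s14N C a b c b a x = ns ∧
    s14N C a b c b c x = np ∧
    s14N C a b c b x a = np ∧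
    s14N C a b c b x c = nfm ∧
    s14N C a b c c a x = np ∧
    s14N C a b c c b x = nfm ∧
    s14N C a b c c x a = ns ∧
    s14N C a b c c x b = np ∧
    s14N C a b c x a b = np ∧
    s14N C a b c x a c = nfm ∧
    s14N C a b c x b a = nfm ∧
    s14N C a b c x b c = nff ∧
    s14N C a b c x c a = np ∧
    s14N C a b c x c b = ns := by
  refine ⟨?_, ?_, ?_, ?_, ?_, ?_, ?_, ?_, ?_, ?_, ?_, ?_, ?_, ?_, ?_, ?_, ?_, ?_⟩
  · exact ((K a b c hab hac hbc).2 x xa xb xc).1.1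
  · exact ((K a b c hab hac hbc).2 x xa xb xc).1.2.1
  · rw [s14N_swap23]; exact ((K a c b hac hab hbc.symm).2 x xa xc xb).1.2.1
  · rw [s14N_swap23]; exact ((K a c b hac hab hbc.symm).2 x xa xc xb).1.1
  · exact ((K a b c hab hac hbc).2 x xa xb xc).1.2.2.2
  · exact ((K a b c hab hac hbc).2 x xa xb xc).1.2.2.1
  · rw [s14N_swap23, s14N_swap12]; exact ((K c a b hac.symm hbc.symm hab).2 x xc xa xb).1.2.2.1
  · rw [s14N_swap23, s14N_swap12]; exact ((K c a b hac.symm hbc.symm hab).2 x xc xa xb).1.2.1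
  · rw [s14N_swap12]; exact ((K b a c hab.symm hbc hac).2 x xb xa xc).1.2.2.1
  · rw [s14N_swap12]; exact ((K b a c hab.symm hbc hac).2 x xb xa xc).1.2.1
  · rw [s14N_swap23]; exact ((K a c b hac hab hbc.symm).2 x xa xc xb).1.2.2.2
  · rw [s14N_swap23]; exact ((K a c b hac hab hbc.symm).2 x xa xc xb).1.2.2.1
  · rw [s14N_swap12, s14N_swap23, s14N_swap12]; exact ((K c b a hbc.symm hac.symm hab.symm).2 x xc xb xa).1.2.2.1
  · rw [s14N_swap12, s14N_swap23, s14N_swap12]; exact ((K c b a hbc.symm hac.symm hab.symm).2 x xc xb xa).1.2.1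
  · rw [s14N_swap12, s14N_swap23]; exact ((K b c a hbc hab.symm hac.symm).2 x xb xc xa).1.2.1
  · rw [s14N_swap12, s14N_swap23]; exact ((K b c a hbc hab.symm hac.symm).2 x xb xc xa).1.1
  · rw [s14N_swap12, s14N_swap23]; exact ((K b c a hbc hab.symm hac.symm).2 x xb xc xa).1.2.2.1
  · rw [s14N_swap12, s14N_swap23]; exact ((K b c a hbc hab.symm hac.symm).2 x xb xc xa).1.2.2.2

theorem s14_facts2 {n : ℕ} (C : Finset (Perm (Fin n))) {n0 nf nm nff nfm np ns fff fsw cyc : ℚ}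
    (K : s14K C n0 nf nm nff nfm np ns fff fsw cyc) (a b c : Fin n) (hab : a ≠ b) (hac : a ≠ c) (hbc : b ≠ c)
    (x y : Fin n) (xa : x ≠ a) (xb : x ≠ b) (xc : x ≠ c) (ya : y ≠ a) (yb : y ≠ b) (yc : y ≠ c) (xy : x ≠ y) :
    s14N C a b c a x y = nf ∧
    s14N C a b c b x y = nm ∧
    s14N C a b c c x y = nm ∧
    s14N C a b c x a y = nm ∧
    s14N C a b c x b y = nf ∧
    s14N C a b c x c y = nm ∧
    s14N C a b c x y a = nm ∧
    s14N C a b c x y b = nm ∧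
    s14N C a b c x y c = nf := by
  refine ⟨?_, ?_, ?_, ?_, ?_, ?_, ?_, ?_, ?_⟩
  · exact (((K a b c hab hac hbc).2 x xa xb xc).2 y ya yb yc xy).1.1
  · exact (((K a b c hab hac hbc).2 x xa xb xc).2 y ya yb yc xy).1.2
  · rw [s14N_swap23]; exact (((K a c b hac hab hbc.symm).2 y ya yc yb).2 x xa xc xb xy.symm).1.2
  · rw [s14N_swap12]; exact (((K b a c hab.symm hbc hac).2 x xb xa xc).2 y yb ya yc xy).1.2
  · rw [s14N_swap12]; exact (((K b a c hab.symm hbc hac).2 x xb xa xc).2 y yb ya yc xy).1.1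
  · rw [s14N_swap12, s14N_swap23]; exact (((K b c a hbc hab.symm hac.symm).2 y yb yc ya).2 x xb xc xa xy.symm).1.2
  · rw [s14N_swap23, s14N_swap12]; exact (((K c a b hac.symm hbc.symm hab).2 x xc xa xb).2 y yc ya yb xy).1.2
  · rw [s14N_swap12, s14N_swap23, s14N_swap12]; exact (((K c b a hbc.symm hac.symm hab.symm).2 y yc yb ya).2 x xc xb xa xy.symm).1.2
  · rw [s14N_swap23, s14N_swap12]; exact (((K c a b hac.symm hbc.symm hab).2 x xc xa xb).2 y yc ya yb xy).1.1

theorem s14N_ne {n : ℕ} (C : Finset (Perm (Fin n))) (a b c : Fin n) (hab : a ≠ b) (hac : a ≠ c)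
    (hbc : b ≠ c) (x y z : Fin n) (h : x = y ∨ x = z ∨ y = z) : s14N C a b c x y z = 0 := by
  unfold s14N
  rw [Nat.cast_eq_zero, card_eq_zero, filter_eq_empty_iff]
  rintro π - ⟨h1, h2, h3⟩
  have := π.injective.ne hab
  have := π.injective.ne hac
  have := π.injective.ne hbc
  grind

theorem s14_split {n : ℕ} (a b c : Fin n) (hab : a ≠ b) (hac : a ≠ c) (hbc : b ≠ c) (f : Fin n → ℚ) :
    ∑ x, f x = f a + f b + f c + ∑ x : {x : Fin n // x ≠ a ∧ x ≠ b ∧ x ≠ c}, f x := by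
  rw [← Finset.sum_subtype (univ.filter fun x => x ≠ a ∧ x ≠ b ∧ x ≠ c) (by simp) f]
  rw [← Finset.sum_filter_not_add_sum_filter univ (fun x => x ≠ a ∧ x ≠ b ∧ x ≠ c)]
  have : (univ.filter fun x => ¬ (x ≠ a ∧ x ≠ b ∧ x ≠ c)) = {a, b, c} := by
    ext x; simp; tauto
  rw [this, sum_insert (by simp [hab, hac]), sum_insert (by simp [hbc]), sum_singleton]
  ring

theorem s14_E {n : ℕ} (C : Finset (Perm (Fin n))) (a b c : Fin n) (g : Fin n → Fin n → Fin n → ℚ) :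
    ∑ π ∈ C, g (π a) (π b) (π c) = ∑ x, ∑ y, ∑ z, s14N C a b c x y z * g x y z := by
  have : ∀ x y z, s14N C a b c x y z * g x y z =
      ∑ π ∈ C, if z = π c then if y = π b then if x = π a then g x y z else 0 else 0 else 0 := by
    intro x y z
    unfold s14N
    rw [card_filter, Nat.cast_sum, sum_mul]
    refine sum_congr rfl fun π _ => ?_
    by_cases h1 : π a = x <;> by_cases h2 : π b = y <;> by_cases h3 : π c = z <;>
      simp only [h1, h2, h3, eq_comm (a := x), eq_comm (a := y), eq_comm (a := z), and_true, and_false, if_true, if_false, and_self] <;> simp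
  simp_rw [this]
  simp_rw [sum_comm (s := univ) (t := C)]
  simp

theorem s14_main {n : ℕ} (C : Finset (Perm (Fin n))) {n0 nf nm nff nfm np ns fff fsw cyc : ℚ}
    (K : s14K C n0 nf nm nff nfm np ns fff fsw cyc) (a b c : Fin n) (hab : a ≠ b) (hac : a ≠ c)
    (hbc : b ≠ c) (g : Fin n → Fin n → Fin n → ℚ) :
    ∑ π ∈ C, g (π a) (π b) (π c) =
      n0 * (∑ x : {x : Fin n // x ≠ a ∧ x ≠ b ∧ x ≠ c}, ∑ y : {x : Fin n // x ≠ a ∧ x ≠ b ∧ x ≠ c},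
        ∑ z : {x : Fin n // x ≠ a ∧ x ≠ b ∧ x ≠ c},
        if x = y ∨ x = z ∨ y = z then 0 else g x y z) +
      (∑ x : {x : Fin n // x ≠ a ∧ x ≠ b ∧ x ≠ c}, ∑ y : {x : Fin n // x ≠ a ∧ x ≠ b ∧ x ≠ c},
        if x = y then 0 else (nf * (g a x y + g x b y + g x y c) +
          nm * (g b x y + g c x y + g x a y + g x c y + g x y a + g x y b))) +
      (∑ x : {x : Fin n // x ≠ a ∧ x ≠ b ∧ x ≠ c},
        (nff * (g a b x + g a x c + g x b c) +
         nfm * (g a c x + g a x b + g c b x + g x b a + g b x c + g x a c) +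
         np * (g b c x + g c x b + g c a x + g x c a + g b x a + g x a b) +
         ns * (g b a x + g c x a + g x c b))) +
      fff * g a b c + fsw * (g a c b + g c b a + g b a c) + cyc * (g b c a + g c a b) := by
  have f0 := s14_facts0 C K a b c hab hac hbc
  have f1 := fun x : {x : Fin n // x ≠ a ∧ x ≠ b ∧ x ≠ c} =>
    s14_facts1 C K a b c hab hac hbc x x.2.1 x.2.2.1 x.2.2.2
  have f2 := fun x y : {x : Fin n // x ≠ a ∧ x ≠ b ∧ x ≠ c} => fun h : x ≠ y =>
    s14_facts2 C K a b c hab hac hbc x y x.2.1 x.2.2.1 x.2.2.2 y.2.1 y.2.2.1 y.2.2.2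
      (fun e => h (Subtype.ext e))
  have f3 := fun x y z : {x : Fin n // x ≠ a ∧ x ≠ b ∧ x ≠ c} => fun (h : ¬ (x = y ∨ x = z ∨ y = z)) =>
    ((((K a b c hab hac hbc).2 x x.2.1 x.2.2.1 x.2.2.2).2 y y.2.1 y.2.2.1 y.2.2.2
      (fun e => h (Or.inl (Subtype.ext e)))).2 z z.2.1 z.2.2.1 z.2.2.2
      (fun e => h (Or.inr (Or.inl (Subtype.ext e)))) (fun e => h (Or.inr (Or.inr (Subtype.ext e)))))
  have z1 : ∀ x z, s14N C a b c x x z = 0 := fun x z => s14N_ne C a b c hab hac hbc _ _ _ (by simp)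
  have z2 : ∀ x z, s14N C a b c x z x = 0 := fun x z => s14N_ne C a b c hab hac hbc _ _ _ (by simp)
  have z3 : ∀ x z, s14N C a b c z x x = 0 := fun x z => s14N_ne C a b c hab hac hbc _ _ _ (by simp)
  rw [s14_E]
  simp only [s14_split a b c hab hac hbc]
  have e3 : ∑ x : {x : Fin n // x ≠ a ∧ x ≠ b ∧ x ≠ c}, ∑ y : {x : Fin n // x ≠ a ∧ x ≠ b ∧ x ≠ c},
        ∑ z : {x : Fin n // x ≠ a ∧ x ≠ b ∧ x ≠ c}, s14N C a b c x y z * g x y z =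
      n0 * (∑ x : {x : Fin n // x ≠ a ∧ x ≠ b ∧ x ≠ c}, ∑ y : {x : Fin n // x ≠ a ∧ x ≠ b ∧ x ≠ c},
        ∑ z : {x : Fin n // x ≠ a ∧ x ≠ b ∧ x ≠ c},
        if x = y ∨ x = z ∨ y = z then 0 else g x y z) := by
    simp only [mul_sum]
    refine sum_congr rfl fun x _ => sum_congr rfl fun y _ => sum_congr rfl fun z _ => ?_
    split_ifs with h
    · rw [s14N_ne C a b c hab hac hbc _ _ _ (by simpa [Subtype.ext_iff] using h)]; simp
    · rw [f3 x y z h]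
  have e2 : (∑ x : {x : Fin n // x ≠ a ∧ x ≠ b ∧ x ≠ c}, ∑ y : {x : Fin n // x ≠ a ∧ x ≠ b ∧ x ≠ c},
        if x = y then 0 else (nf * (g a x y + g x b y + g x y c) +
          nm * (g b x y + g c x y + g x a y + g x c y + g x y a + g x y b))) =
      ∑ x : {x : Fin n // x ≠ a ∧ x ≠ b ∧ x ≠ c}, ∑ y : {x : Fin n // x ≠ a ∧ x ≠ b ∧ x ≠ c},
        (s14N C a b c a x y * g a x y + s14N C a b c x b y * g x b y + s14N C a b c x y c * g x y c
        + s14N C a b c b x y * g b x y + s14N C a b c c x y * g c x y + s14N C a b c x a y * g x a y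
        + s14N C a b c x c y * g x c y + s14N C a b c x y a * g x y a + s14N C a b c x y b * g x y b) := by
    refine sum_congr rfl fun x _ => sum_congr rfl fun y _ => ?_
    split_ifs with h
    · simp [h, z1, z2, z3]
    · simp only [f2 x y h]; ring
  rw [← e3, e2]
  simp only [z1, z2, z3, f0, f1, mul_add, sum_add_distrib, zero_mul, sum_const_zero]
  ring

theorem s14_W1 {O : Type*} [Fintype O] [DecidableEq O] (x : O) (t : ℚ) :
    ∑ y : O, (if x = y then 0 else t) = ((Fintype.card O : ℚ) - 1) * t := by
  have : ∀ y, (if x = y then 0 else t) = t - if x = y then t else 0 := by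
    intro y; split_ifs <;> simp
  simp only [this, sum_sub_distrib, sum_ite_eq, sum_const, card_univ, nsmul_eq_mul, mem_univ, if_true]
  ring

theorem s14_W2 {O : Type*} [Fintype O] [DecidableEq O] (x y : O) (t : ℚ) :
    ∑ z : O, (if x = y ∨ x = z ∨ y = z then 0 else t) =
      if x = y then 0 else ((Fintype.card O : ℚ) - 2) * t := by
  by_cases h : x = y
  · simp [h]
  have : ∀ z, (if x = y ∨ x = z ∨ y = z then 0 else t) =
      t - (if x = z then t else 0) - if y = z then t else 0 := by
    intro z
    by_cases h1 : x = z
    · subst h1; simp [Ne.symm h]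
    · by_cases h2 : y = z <;> simp [h, h1, h2]
  simp only [this, sum_sub_distrib, sum_ite_eq, sum_const, card_univ, nsmul_eq_mul, mem_univ, if_true, if_neg h]
  ring

theorem s14_D2 {O : Type*} [Fintype O] [DecidableEq O] (t : ℚ) :
    ∑ x : O, ∑ y : O, (if x = y then 0 else t) =
      (Fintype.card O : ℚ) * ((Fintype.card O : ℚ) - 1) * t := by
  simp only [s14_W1, sum_const, card_univ, nsmul_eq_mul]; ring

theorem s14_D3 {O : Type*} [Fintype O] [DecidableEq O] (t : ℚ) :
    ∑ x : O, ∑ y : O, ∑ z : O, (if x = y ∨ x = z ∨ y = z then 0 else t) =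
      (Fintype.card O : ℚ) * ((Fintype.card O : ℚ) - 1) * ((Fintype.card O : ℚ) - 2) * t := by
  simp only [s14_W2, s14_D2]; ring

theorem s14_equi {n : ℕ} (C : Finset (Perm (Fin n)))
    (hC : ∀ σ π : Perm (Fin n), π ∈ C → σ * π * σ⁻¹ ∈ C)
    (Q : Perm (Fin n) → Fin n → Fin n → Fin n → ℚ)
    (hQ : ∀ σ π u v w, Q (σ * π * σ⁻¹) (σ u) (σ v) (σ w) = Q π u v w) (k : ℚ)
    (hk : ∀ π ∈ C, ∑ u, ∑ v, ∑ w, (if u = v ∨ u = w ∨ v = w then 0 else Q π u v w) = k)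
    (a b c : Fin n) (hab : a ≠ b) (hac : a ≠ c) (hbc : b ≠ c) :
    (n : ℚ) * ((n : ℚ) - 1) * ((n : ℚ) - 2) * ∑ π ∈ C, Q π a b c = #C * k := by
  obtain ⟨κ, h⟩ := s14_const (k := 3) (fun e : Fin 3 → Fin n => ∑ π ∈ C, Q π (e 0) (e 1) (e 2)) (by
    intro σ e
    symm
    refine Finset.sum_bij' (fun π _ => σ * π * σ⁻¹) (fun π _ => σ⁻¹ * π * σ) ?_ ?_ ?_ ?_ ?_
    · intro π h; exact hC _ _ h
    · intro π h; simpa using hC σ⁻¹ _ h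
    · intro π _; simp [mul_assoc]
    · intro π _; simp [mul_assoc]
    · intro π _; exact (hQ _ _ _ _ _).symm)
  have h' : ∀ u v w : Fin n, u ≠ v → u ≠ w → v ≠ w → ∑ π ∈ C, Q π u v w = κ := by
    intro u v w h1 h2 h3
    have hi : Function.Injective ![u, v, w] := by
      intro i j; fin_cases i <;> fin_cases j <;> simp [*, Ne.symm]
    exact h _ hi
  rw [h' a b c hab hac hbc]
  have h2 := s14_D3 (O := Fin n) κ
  rw [Fintype.card_fin] at h2
  rw [← h2]
  have h3 : ∑ π ∈ C, ∑ u, ∑ v, ∑ w, (if u = v ∨ u = w ∨ v = w then 0 else Q π u v w) = #C * k := by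
    rw [sum_congr rfl hk]; simp
  rw [← h3, sum_comm (s := C)]
  refine sum_congr rfl fun u _ => ?_
  rw [sum_comm (s := C)]
  refine sum_congr rfl fun v _ => ?_
  rw [sum_comm (s := C)]
  refine sum_congr rfl fun w _ => ?_
  split_ifs with hh
  · simp
  · push Not at hh
    exact (h' u v w hh.1 hh.2.1 hh.2.2).symm

theorem s14_K {n : ℕ} (π : Perm (Fin n)) (p q r : ℚ)
    (hp : ∑ u, (if π u = u then 1 else 0 : ℚ) = p)
    (hq : ∑ u, (if π u ≠ u ∧ π (π u) = u then 1 else 0 : ℚ) = 2 * q)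
    (hr : ∑ u, (if π u ≠ u ∧ π (π (π u)) = u then 1 else 0 : ℚ) = 3 * r) :
    (∑ u, ∑ v, ∑ w, (if u = v ∨ u = w ∨ v = w then 0 else if π u = u then 1 else 0 : ℚ) = p * (n - 1) * (n - 2)) ∧
    (∑ u, ∑ v, ∑ w, (if u = v ∨ u = w ∨ v = w then 0 else if π u = v then 1 else 0 : ℚ) = (n - p) * (n - 2)) ∧
    (∑ u, ∑ v, ∑ w, (if u = v ∨ u = w ∨ v = w then 0 else if π u = u ∧ π v = v then 1 else 0 : ℚ) = p * (p - 1) * (n - 2)) ∧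
    (∑ u, ∑ v, ∑ w, (if u = v ∨ u = w ∨ v = w then 0 else if π u = v ∧ π v = u then 1 else 0 : ℚ) = 2 * q * (n - 2)) ∧
    (∑ u, ∑ v, ∑ w, (if u = v ∨ u = w ∨ v = w then 0 else if π u = v ∧ π v = w then 1 else 0 : ℚ) = n - p - 2 * q) ∧
    (∑ u, ∑ v, ∑ w, (if u = v ∨ u = w ∨ v = w then 0 else if π u = u ∧ π v = w then 1 else 0 : ℚ) = p * (n - p)) ∧
    (∑ u, ∑ v, ∑ w, (if u = v ∨ u = w ∨ v = w then 0 else if π u = u ∧ π v = v ∧ π w = w then 1 else 0 : ℚ) = p * (p - 1) * (p - 2)) ∧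
    (∑ u, ∑ v, ∑ w, (if u = v ∨ u = w ∨ v = w then 0 else if π u = u ∧ π v = w ∧ π w = v then 1 else 0 : ℚ) = p * (2 * q)) ∧
    (∑ u, ∑ v, ∑ w, (if u = v ∨ u = w ∨ v = w then 0 else if π u = v ∧ π v = w ∧ π w = u then 1 else 0 : ℚ) = 3 * r) := by
  have inj : ∀ u v, π u = π v ↔ u = v := fun u v => π.injective.eq_iff
  have hn : ∑ u : Fin n, (1 : ℚ) = n := by simp
  refine ⟨?_, ?_, ?_, ?_, ?_, ?_, ?_, ?_, ?_⟩
  · simp only [s14_W2, s14_W1, Fintype.card_fin, ← mul_sum, hp]; ring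
  · simp only [s14_W2, Fintype.card_fin]
    rw [← hp, ← hn, ← sum_sub_distrib, sum_mul]
    refine sum_congr rfl fun u _ => ?_
    rw [Finset.sum_eq_single (π u)]
    · simp only [eq_comm]; split_ifs <;> simp
    · intro v _ h; simp [Ne.symm h]
    · simp
  · simp only [s14_W2, Fintype.card_fin]
    have : ∀ u v, (if u = v then 0 else ((n : ℚ) - 2) * if π u = u ∧ π v = v then 1 else 0) =
      (n - 2) * ((if π u = u then 1 else 0) * (if π v = v then 1 else 0) - if u = v then (if π u = u then 1 else 0) else 0) := by
      intro u v
      by_cases h : u = v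
      · subst h; by_cases h1 : π u = u <;> simp [h1]
      · by_cases h1 : π u = u <;> by_cases h2 : π v = v <;> simp [h, h1, h2]
    simp only [this, ← mul_sum, sum_sub_distrib, sum_ite_eq, mem_univ, if_true, hp, ← sum_mul]; ring
  · simp only [s14_W2, Fintype.card_fin]
    rw [← hq, sum_mul]
    refine sum_congr rfl fun u _ => ?_
    rw [Finset.sum_eq_single (π u)]
    · by_cases h : π u = u
      · simp [h]
      · by_cases h2 : π (π u) = u <;> simp [h, h2, Ne.symm h]
    · intro v _ h; simp [Ne.symm h]
    · simp
  · rw [← hp, ← hn, ← hq, ← sum_sub_distrib, ← sum_sub_distrib]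
    refine sum_congr rfl fun u _ => ?_
    rw [Finset.sum_eq_single (π u), Finset.sum_eq_single (π (π u))]
    · by_cases h : π u = u
      · simp [h]
      · by_cases h2 : π (π u) = u <;> simp [h, h2, inj, Ne.symm h, eq_comm (a := u)]
    · intro v _ h; simp [Ne.symm h]
    · simp
    · intro v _ h; simp [Ne.symm h]
    · simp
  · have : (n : ℚ) - p = ∑ v, (1 - if π v = v then 1 else 0) := by
      rw [sum_sub_distrib, hn, hp]
    rw [this, ← hp, sum_mul]
    refine sum_congr rfl fun u _ => ?_
    rw [mul_sum]
    refine sum_congr rfl fun v _ => ?_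
    rw [Finset.sum_eq_single (π v)]
    · grind
    · intro v _ h; simp [Ne.symm h]
    · simp
  · have hw : ∀ u v, ∑ w, (if u = v ∨ u = w ∨ v = w then 0 else if π u = u ∧ π v = v ∧ π w = w then 1 else 0 : ℚ) =
       (p - 2) * (if u = v then 0 else if π u = u ∧ π v = v then 1 else 0) := by
      intro u v
      by_cases h : u = v
      · simp [h]
      by_cases h1 : π u = u
      · by_cases h2 : π v = v
        · have h3 : ∀ w, (if u = v ∨ u = w ∨ v = w then 0 else if π u = u ∧ π v = v ∧ π w = w then 1 else 0 : ℚ) =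
            (if π w = w then 1 else 0) - (if u = w then 1 else 0) - (if v = w then 1 else 0) := by
            intro w
            by_cases h4 : u = w
            · subst h4; simp [Ne.symm h, h1]
            · by_cases h5 : v = w
              · subst h5; simp [h2, h4]
              · simp [h, h1, h2, h4, h5]
          simp only [h3]
          simp only [sum_sub_distrib, hp, sum_ite_eq, mem_univ, if_true, h, h1, h2, and_self, if_false]
          ring
        · simp [h2]
      · simp [h1]
    have h2 : ∀ u v, (if u = v then 0 else if π u = u ∧ π v = v then 1 else 0 : ℚ) =
      ((if π u = u then 1 else 0) * (if π v = v then 1 else 0) - if u = v then (if π u = u then 1 else 0) else 0) := by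
      intro u v
      by_cases h : u = v
      · subst h; by_cases h1 : π u = u <;> simp [h1]
      · by_cases h1 : π u = u <;> by_cases h2 : π v = v <;> simp [h, h1, h2]
    simp only [hw, h2, ← mul_sum, sum_sub_distrib, sum_ite_eq, mem_univ, if_true, hp, ← sum_mul]; ring
  · rw [← hp, ← hq, sum_mul]
    refine sum_congr rfl fun u _ => ?_
    rw [mul_sum]
    refine sum_congr rfl fun v _ => ?_
    rw [Finset.sum_eq_single (π v)]
    · grind
    · intro v _ h; simp [Ne.symm h]
    · simp
  · rw [← hr]
    refine sum_congr rfl fun u _ => ?_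
    rw [Finset.sum_eq_single (π u), Finset.sum_eq_single (π (π u))]
    · grind
    · intro v _ h; simp [Ne.symm h]
    · simp
    · intro v _ h; simp [Ne.symm h]
    · simp

theorem s14_cardO {n : ℕ} (a b c : Fin n) (hab : a ≠ b) (hac : a ≠ c) (hbc : b ≠ c) :
    (Fintype.card {x : Fin n // x ≠ a ∧ x ≠ b ∧ x ≠ c} : ℚ) = n - 3 := by
  have h := s14_split a b c hab hac hbc (fun _ => 1)
  simp only [sum_const, card_univ, nsmul_eq_mul, Fintype.card_fin, mul_one] at h
  linarith

theorem s14_marg {n : ℕ} (C : Finset (Perm (Fin n)))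
    (hC : ∀ σ π : Perm (Fin n), π ∈ C → σ * π * σ⁻¹ ∈ C)
    {n0 nf nm nff nfm np ns fff fsw cyc : ℚ}
    (K : s14K C n0 nf nm nff nfm np ns fff fsw cyc) (a b c : Fin n) (hab : a ≠ b) (hac : a ≠ c)
    (hbc : b ≠ c) (p q r m N : ℚ) (hm : m = n - 3) (hN : N = n * (n - 1) * (n - 2))
    (hp : ∀ π ∈ C, ∑ u, (if π u = u then 1 else 0 : ℚ) = p)
    (hq : ∀ π ∈ C, ∑ u, (if π u ≠ u ∧ π (π u) = u then 1 else 0 : ℚ) = 2 * q)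
    (hr : ∀ π ∈ C, ∑ u, (if π u ≠ u ∧ π (π (π u)) = u then 1 else 0 : ℚ) = 3 * r) :
    (#C = m * (m - 1) * (m - 2) * n0 + m * (m - 1) * (3 * nf + 6 * nm) +
      m * (3 * nff + 6 * nfm + 6 * np + 3 * ns) + fff + 3 * fsw + 2 * cyc) ∧
    (N * (m * (m - 1) * nf + 2 * m * nff + 2 * m * nfm + fff + fsw) = #C * (p * (n - 1) * (n - 2))) ∧
    (N * (m * (m - 1) * nm + m * (ns + 2 * np + nfm) + fsw + cyc) = #C * ((n - p) * (n - 2))) ∧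
    (N * (m * nff + fff) = #C * (p * (p - 1) * (n - 2))) ∧
    (N * (m * ns + fsw) = #C * (2 * q * (n - 2))) ∧
    (N * (m * np + cyc) = #C * (n - p - 2 * q)) ∧
    (N * (m * nfm + fsw) = #C * (p * (n - p))) ∧
    (N * fff = #C * (p * (p - 1) * (p - 2))) ∧
    (N * fsw = #C * (p * (2 * q))) ∧
    (N * cyc = #C * (3 * r)) := by
  have hO := s14_cardO a b c hab hac hbc
  rw [← hm] at hO
  have M := s14_main C K a b c hab hac hbc
  have xa : ∀ x : {x : Fin n // x ≠ a ∧ x ≠ b ∧ x ≠ c}, ((x : Fin n) = a) = False := fun x => by simp [x.2.1]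
  have xb : ∀ x : {x : Fin n // x ≠ a ∧ x ≠ b ∧ x ≠ c}, ((x : Fin n) = b) = False := fun x => by simp [x.2.2.1]
  have xc : ∀ x : {x : Fin n // x ≠ a ∧ x ≠ b ∧ x ≠ c}, ((x : Fin n) = c) = False := fun x => by simp [x.2.2.2]
  have inj : ∀ (π : Perm (Fin n)) u v, π u = π v ↔ u = v := fun π u v => π.injective.eq_iff
  have e := s14_equi C hC
  have kk := fun π (h : π ∈ C) => s14_K π p q r (hp π h) (hq π h) (hr π h)
  rw [hN]
  refine ⟨?_, ?_, ?_, ?_, ?_, ?_, ?_, ?_, ?_, ?_⟩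
  · have h := M (fun _ _ _ => 1)
    simp only [s14_D3, s14_D2, hO, sum_const, card_univ, nsmul_eq_mul, mul_one] at h
    rw [h]; ring
  · rw [← e (fun π u v w => if π u = u then 1 else 0) (by intros; simp [inj]) _ (fun π h => (kk π h).1) a b c hab hac hbc]
    congr 1
    have h := M (fun x y z => if x = a then 1 else 0)
    simp [xa, xb, xc, hab.symm, hac.symm, s14_D2, hO] at h
    simp only [sum_boole, h]; ring
  · rw [← e (fun π u v w => if π u = v then 1 else 0) (by intros; simp [inj]) _ (fun π h => (kk π h).2.1) a b c hab hac hbc]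
    congr 1
    have h := M (fun x y z => if x = b then 1 else 0)
    simp [xa, xb, xc, hab, hbc.symm, s14_D2, hO] at h
    simp only [sum_boole, h]; ring
  · rw [← e (fun π u v w => if π u = u ∧ π v = v then 1 else 0) (by intros; simp [inj]) _ (fun π h => (kk π h).2.2.1) a b c hab hac hbc]
    congr 1
    have h := M (fun x y z => if x = a ∧ y = b then 1 else 0)
    simp [xa, xb, xc, hab, hac.symm, hbc.symm, hO] at h
    simp only [sum_boole, h]
  · rw [← e (fun π u v w => if π u = v ∧ π v = u then 1 else 0) (by intros; simp [inj]) _ (fun π h => (kk π h).2.2.2.1) a b c hab hac hbc]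
    congr 1
    have h := M (fun x y z => if x = b ∧ y = a then 1 else 0)
    simp [xa, xb, xc, hab, hab.symm, hac.symm, hbc.symm, hO] at h
    simp only [sum_boole, h]
  · rw [← e (fun π u v w => if π u = v ∧ π v = w then 1 else 0) (by intros; simp [inj]) _ (fun π h => (kk π h).2.2.2.2.1) a b c hab hac hbc]
    congr 1
    have h := M (fun x y z => if x = b ∧ y = c then 1 else 0)
    simp [xa, xb, xc, hab, hac, hbc, hab.symm, hac.symm, hbc.symm, hO] at h
    simp only [sum_boole, h]
  · rw [← e (fun π u v w => if π u = u ∧ π v = w then 1 else 0) (by intros; simp [inj]) _ (fun π h => (kk π h).2.2.2.2.2.1) a b c hab hac hbc]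
    congr 1
    have h := M (fun x y z => if x = a ∧ y = c then 1 else 0)
    simp [xa, xb, xc, hab, hac, hbc, hab.symm, hac.symm, hbc.symm, hO] at h
    simp only [sum_boole, h]
  · rw [← e (fun π u v w => if π u = u ∧ π v = v ∧ π w = w then 1 else 0) (by intros; simp [inj]) _ (fun π h => (kk π h).2.2.2.2.2.2.1) a b c hab hac hbc]
    congr 1
    have h := M (fun x y z => if x = a ∧ y = b ∧ z = c then 1 else 0)
    simp [xa, xb, xc, hab, hac, hbc, hab.symm, hac.symm, hbc.symm, hO] at h
    simp only [sum_boole, h]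
  · rw [← e (fun π u v w => if π u = u ∧ π v = w ∧ π w = v then 1 else 0) (by intros; simp [inj]) _ (fun π h => (kk π h).2.2.2.2.2.2.2.1) a b c hab hac hbc]
    congr 1
    have h := M (fun x y z => if x = a ∧ y = c ∧ z = b then 1 else 0)
    simp [xa, xb, xc, hab, hac, hbc, hab.symm, hac.symm, hbc.symm, hO] at h
    simp only [sum_boole, h]
  · rw [← e (fun π u v w => if π u = v ∧ π v = w ∧ π w = u then 1 else 0) (by intros; simp [inj]) _ (fun π h => (kk π h).2.2.2.2.2.2.2.2) a b c hab hac hbc]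
    congr 1
    have h := M (fun x y z => if x = b ∧ y = c ∧ z = a then 1 else 0)
    simp [xa, xb, xc, hab, hac, hbc, hab.symm, hac.symm, hbc.symm, hO] at h
    simp only [sum_boole, h]

theorem s14_ord2 {O : Type*} [Fintype O] [LinearOrder O] :
    ∑ x : O, ∑ y : O, (if y < x then 1 else 0 : ℚ) =
      (Fintype.card O : ℚ) * ((Fintype.card O : ℚ) - 1) / 2 := by
  have h := s14_D2 (O := O) 1
  have h1 : ∀ x y : O, (if x = y then 0 else 1 : ℚ) = (if y < x then 1 else 0) + (if x < y then 1 else 0) := by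
    intro x y
    rcases lt_trichotomy x y with h | h | h
    · simp [h, h.ne, h.le, not_lt.2 h.le]
    · simp [h]
    · simp [h, h.ne', h.le, not_lt.2 h.le]
  simp only [h1, sum_add_distrib] at h
  rw [sum_comm (f := fun x y : O => (if x < y then 1 else 0 : ℚ))] at h
  linarith

theorem s14_ord3 {O : Type*} [Fintype O] [LinearOrder O] :
    ∑ x : O, ∑ y : O, ∑ z : O, (if z < x ∧ x < y then 1 else 0 : ℚ) =
      (Fintype.card O : ℚ) * ((Fintype.card O : ℚ) - 1) * ((Fintype.card O : ℚ) - 2) / 6 := by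
  have h := s14_D3 (O := O) 1
  have h1 : ∀ x y z : O, (if x = y ∨ x = z ∨ y = z then 0 else 1 : ℚ) =
      (if z < x ∧ x < y then 1 else 0) + (if y < x ∧ x < z then 1 else 0)
      + (if z < y ∧ y < x then 1 else 0) + (if x < y ∧ y < z then 1 else 0)
      + (if x < z ∧ z < y then 1 else 0) + (if y < z ∧ z < x then 1 else 0) := by
    intro x y z
    rcases lt_trichotomy x y with h | h | h <;> rcases lt_trichotomy y z with h' | h' | h' <;>
      rcases lt_trichotomy x z with h'' | h'' | h'' <;> grind
  simp only [h1, sum_add_distrib] at h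
  have s1 : ∀ f : O → O → O → ℚ, ∑ x, ∑ y, ∑ z, f x y z = ∑ x, ∑ y, ∑ z, f y x z := fun f => sum_comm
  have s2 : ∀ f : O → O → O → ℚ, ∑ x, ∑ y, ∑ z, f x y z = ∑ x, ∑ y, ∑ z, f x z y :=
    fun f => sum_congr rfl fun x _ => sum_comm
  have a1 := s2 (fun x y z => (if y < x ∧ x < z then 1 else 0 : ℚ))
  have a2 := s1 (fun x y z => (if z < y ∧ y < x then 1 else 0 : ℚ))
  have a3 := s1 (fun x y z => (if x < y ∧ y < z then 1 else 0 : ℚ))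
  have a4 := s2 (fun x y z => (if x < z ∧ z < y then 1 else 0 : ℚ))
  have a5 := s2 (fun x y z => (if y < z ∧ z < x then 1 else 0 : ℚ))
  linarith

set_option maxHeartbeats 2000000 in
theorem s14_E1 {n : ℕ} (C : Finset (Perm (Fin n))) {n0 nf nm nff nfm np ns fff fsw cyc : ℚ}
    (K : s14K C n0 nf nm nff nfm np ns fff fsw cyc) (a b c : Fin n) (hab : (a : ℕ) + 1 = b)
    (hbc : (b : ℕ) + 1 = c) (m : ℚ) (hm : m = n - 3)
    (hO : (Fintype.card {x : Fin n // x ≠ a ∧ x ≠ b ∧ x ≠ c} : ℚ) = n - 3) :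
    (∑ π ∈ C, (if π c < π a ∧ π a < π b then 1 else 0 : ℚ) =
      n0 * (m * (m - 1) * (m - 2) / 6) + (nf + 2 * nm) * (m * (m - 1) / 2) +
      (a : ℕ) * (nff + nfm + np) + (m - (a : ℕ)) * (2 * np + ns) + cyc) ∧
    (∑ π ∈ C, (if π b < π c ∧ π c < π a then 1 else 0 : ℚ) =
      n0 * (m * (m - 1) * (m - 2) / 6) + (nf + 2 * nm) * (m * (m - 1) / 2) +
      (m - (a : ℕ)) * (nff + nfm + np) + (a : ℕ) * (2 * np + ns) + cyc) := by
  have lab : a < b := by rw [Fin.lt_def]; omega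
  have lbc : b < c := by rw [Fin.lt_def]; omega
  have lac := lab.trans lbc
  have M := s14_main C K a b c lab.ne lac.ne lbc.ne
  rw [← hm] at hO
  have xb : ∀ x : {x : Fin n // x ≠ a ∧ x ≠ b ∧ x ≠ c}, ((x : Fin n) < b) = ((x : Fin n) < a) := by
    rintro ⟨x, h1, h2, h3⟩; simp only [Fin.lt_def, ne_eq, Fin.ext_iff, eq_iff_iff] at *; omega
  have xc : ∀ x : {x : Fin n // x ≠ a ∧ x ≠ b ∧ x ≠ c}, ((x : Fin n) < c) = ((x : Fin n) < a) := by
    rintro ⟨x, h1, h2, h3⟩; simp only [Fin.lt_def, ne_eq, Fin.ext_iff, eq_iff_iff] at *; omega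
  have ax : ∀ x : {x : Fin n // x ≠ a ∧ x ≠ b ∧ x ≠ c}, (a < (x : Fin n)) = ¬ ((x : Fin n) < a) := by
    rintro ⟨x, h1, h2, h3⟩; simp only [Fin.lt_def, ne_eq, Fin.ext_iff, eq_iff_iff] at *; omega
  have bx : ∀ x : {x : Fin n // x ≠ a ∧ x ≠ b ∧ x ≠ c}, (b < (x : Fin n)) = ¬ ((x : Fin n) < a) := by
    rintro ⟨x, h1, h2, h3⟩; simp only [Fin.lt_def, ne_eq, Fin.ext_iff, eq_iff_iff] at *; omega
  have cx : ∀ x : {x : Fin n // x ≠ a ∧ x ≠ b ∧ x ≠ c}, (c < (x : Fin n)) = ¬ ((x : Fin n) < a) := by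
    rintro ⟨x, h1, h2, h3⟩; simp only [Fin.lt_def, ne_eq, Fin.ext_iff, eq_iff_iff] at *; omega
  have hL : ∑ x : {x : Fin n // x ≠ a ∧ x ≠ b ∧ x ≠ c}, (if (x : Fin n) < a then 1 else 0 : ℚ) = (a : ℕ) := by
    have h := s14_split a b c lab.ne lac.ne lbc.ne (fun x => if x < a then 1 else 0)
    simp only [lt_irrefl, not_lt.2 lab.le, not_lt.2 lac.le, if_false] at h
    have h2 : ∑ x : Fin n, (if x < a then 1 else 0 : ℚ) = (a : ℕ) := by
      rw [sum_boole]
      have : (univ.filter fun x => x < a) = Iio a := by ext; simp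
      rw [this, Fin.card_Iio]
    rw [h2] at h
    simpa using h.symm
  have hU : ∑ x : {x : Fin n // x ≠ a ∧ x ≠ b ∧ x ≠ c}, (if ¬ (x : Fin n) < a then 1 else 0 : ℚ) = m - (a : ℕ) := by
    have : ∀ x : {x : Fin n // x ≠ a ∧ x ≠ b ∧ x ≠ c}, (if ¬ (x : Fin n) < a then 1 else 0 : ℚ) =
      1 - (if (x : Fin n) < a then 1 else 0 : ℚ) := by intro x; split_ifs <;> simp_all
    simp only [this, sum_sub_distrib, hL, sum_const, card_univ, nsmul_eq_mul, hO]; ring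
  have o3 := s14_ord3 (O := {x : Fin n // x ≠ a ∧ x ≠ b ∧ x ≠ c})
  have o3' : ∑ x : {x : Fin n // x ≠ a ∧ x ≠ b ∧ x ≠ c}, ∑ y : {x : Fin n // x ≠ a ∧ x ≠ b ∧ x ≠ c},
        ∑ z : {x : Fin n // x ≠ a ∧ x ≠ b ∧ x ≠ c}, (if y < z ∧ z < x then 1 else 0 : ℚ) =
      m * (m - 1) * (m - 2) / 6 := by
    rw [← hO, ← s14_ord3, sum_comm]
    rw [sum_comm]
    rw [sum_congr rfl fun x _ => sum_comm]
    exact sum_comm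
  have o2 := s14_ord2 (O := {x : Fin n // x ≠ a ∧ x ≠ b ∧ x ≠ c})
  rw [hO] at o3 o2
  have i1 : (a < a) = False := by simp
  have i2 : (b < b) = False := by simp
  have i3 : (c < c) = False := by simp
  have i4 : (b < a) = False := by simp [lab.le]
  have i5 : (c < a) = False := by simp [lac.le]
  have i6 : (c < b) = False := by simp [lbc.le]
  have i7 : (a < b) = True := by simp [lab]
  have i8 : (a < c) = True := by simp [lac]
  have i9 : (b < c) = True := by simp [lbc]
  have tt : ∀ x y : {x : Fin n // x ≠ a ∧ x ≠ b ∧ x ≠ c}, ∀ s t : ℚ, (x = y → s = 0) → s = t →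
      (if x = y then 0 else s) = t := by
    intro x y s t h1 h2
    split_ifs with h
    · rw [← h2, h1 h]
    · exact h2
  constructor
  · rw [M (fun x y z => if z < x ∧ x < y then 1 else 0)]
    simp only [xb, xc, ax, bx, cx, i1, i2, i3, i4, i5, i6, i7, i8, i9, and_true, true_and, and_false,
      false_and, if_false, add_zero, zero_add, mul_zero, mul_one, if_true]
    have t3 : ∑ x : {x : Fin n // x ≠ a ∧ x ≠ b ∧ x ≠ c}, ∑ y : {x : Fin n // x ≠ a ∧ x ≠ b ∧ x ≠ c},
        ∑ z : {x : Fin n // x ≠ a ∧ x ≠ b ∧ x ≠ c},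
        (if x = y ∨ x = z ∨ y = z then 0 else if (z : Fin n) < x ∧ (x : Fin n) < y then 1 else 0 : ℚ) =
        m * (m - 1) * (m - 2) / 6 := by
      rw [← o3]
      refine sum_congr rfl fun x _ => sum_congr rfl fun y _ => sum_congr rfl fun z _ => ?_
      simp only [Subtype.coe_lt_coe]
      split_ifs <;> grind
    have t2 : ∑ x : {x : Fin n // x ≠ a ∧ x ≠ b ∧ x ≠ c}, ∑ y : {x : Fin n // x ≠ a ∧ x ≠ b ∧ x ≠ c},
        ((if (y : Fin n) < a ∧ ¬ (x : Fin n) < a then 1 else 0) + (if (y : Fin n) < x ∧ (x : Fin n) < a then 1 else 0)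
          + (if ¬ (x : Fin n) < a ∧ (x : Fin n) < y then 1 else 0) : ℚ) = m * (m - 1) / 2 := by
      rw [← o2]
      simp only [sum_add_distrib]
      rw [sum_comm (f := fun x y : {x : Fin n // x ≠ a ∧ x ≠ b ∧ x ≠ c} =>
        (if ¬ (x : Fin n) < a ∧ (x : Fin n) < y then 1 else 0 : ℚ))]
      simp only [← sum_add_distrib]
      refine sum_congr rfl fun x _ => sum_congr rfl fun y _ => ?_
      simp only [← Subtype.coe_lt_coe]
      by_cases h1 : (x : Fin n) < a <;> by_cases h2 : (y : Fin n) < a <;>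
        by_cases h3 : (y : Fin n) < x <;> simp only [h1, h2, h3] <;> norm_num <;> order
    rw [t3, ← t2]
    simp only [mul_sum]
    have t1 : ∑ x : {x : Fin n // x ≠ a ∧ x ≠ b ∧ x ≠ c},
        ((nff + nfm + np) * (if (x : Fin n) < a then 1 else 0) +
          (2 * np + ns) * (if ¬ (x : Fin n) < a then 1 else 0) : ℚ) =
        (nff + nfm + np) * (a : ℕ) + (2 * np + ns) * (m - (a : ℕ)) := by
      rw [sum_add_distrib, ← mul_sum, ← mul_sum, hL, hU]
    rw [add_assoc _ (((a : ℕ) : ℚ) * _), mul_comm ((a : ℕ) : ℚ), mul_comm (m - _), ← t1]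
    congr 1
    · congr 1
      · congr 1
        refine sum_congr rfl fun x _ => sum_congr rfl fun y _ => ?_
        apply tt
        · rintro rfl; simp only [lt_irrefl, and_false, false_and, and_not_self, if_false, add_zero, mul_zero]
        · ring
      · refine sum_congr rfl fun x _ => ?_
        by_cases h : (x : Fin n) < a
        · simp only [h, not_true, false_and, and_false, true_and, and_true, if_true, if_false]; ring
        · simp only [h, not_false_iff, false_and, and_false, true_and, and_true, if_true, if_false]; ring
  · rw [M (fun x y z => if y < z ∧ z < x then 1 else 0)]
    simp only [xb, xc, ax, bx, cx, i1, i2, i3, i4, i5, i6, i7, i8, i9, and_true, true_and, and_false,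
      false_and, if_false, add_zero, zero_add, mul_zero, mul_one, if_true]
    have t3 : ∑ x : {x : Fin n // x ≠ a ∧ x ≠ b ∧ x ≠ c}, ∑ y : {x : Fin n // x ≠ a ∧ x ≠ b ∧ x ≠ c},
        ∑ z : {x : Fin n // x ≠ a ∧ x ≠ b ∧ x ≠ c},
        (if x = y ∨ x = z ∨ y = z then 0 else if (y : Fin n) < z ∧ (z : Fin n) < x then 1 else 0 : ℚ) =
        m * (m - 1) * (m - 2) / 6 := by
      rw [← o3']
      refine sum_congr rfl fun x _ => sum_congr rfl fun y _ => sum_congr rfl fun z _ => ?_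
      simp only [Subtype.coe_lt_coe]
      split_ifs <;> grind
    have t2 : ∑ x : {x : Fin n // x ≠ a ∧ x ≠ b ∧ x ≠ c}, ∑ y : {x : Fin n // x ≠ a ∧ x ≠ b ∧ x ≠ c},
        ((if (y : Fin n) < a ∧ ¬ (x : Fin n) < a then 1 else 0) + (if ¬ (y : Fin n) < a ∧ (y : Fin n) < x then 1 else 0)
          + (if (x : Fin n) < y ∧ (y : Fin n) < a then 1 else 0) : ℚ) = m * (m - 1) / 2 := by
      rw [← o2]
      simp only [sum_add_distrib]
      rw [sum_comm (f := fun x y : {x : Fin n // x ≠ a ∧ x ≠ b ∧ x ≠ c} =>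
        (if (x : Fin n) < y ∧ (y : Fin n) < a then 1 else 0 : ℚ))]
      simp only [← sum_add_distrib]
      refine sum_congr rfl fun x _ => sum_congr rfl fun y _ => ?_
      simp only [← Subtype.coe_lt_coe]
      by_cases h1 : (x : Fin n) < a <;> by_cases h2 : (y : Fin n) < a <;>
        by_cases h3 : (y : Fin n) < x <;> simp only [h1, h2, h3] <;> norm_num <;> order
    rw [t3, ← t2]
    simp only [mul_sum]
    have t1 : ∑ x : {x : Fin n // x ≠ a ∧ x ≠ b ∧ x ≠ c},
        ((2 * np + ns) * (if (x : Fin n) < a then 1 else 0) +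
          (nff + nfm + np) * (if ¬ (x : Fin n) < a then 1 else 0) : ℚ) =
        (2 * np + ns) * (a : ℕ) + (nff + nfm + np) * (m - (a : ℕ)) := by
      rw [sum_add_distrib, ← mul_sum, ← mul_sum, hL, hU]
    rw [add_assoc _ ((m - (a : ℕ)) * _), mul_comm ((a : ℕ) : ℚ), mul_comm (m - _), add_comm ((nff + nfm + np) * _), ← t1]
    congr 1
    · congr 1
      · congr 1
        refine sum_congr rfl fun x _ => sum_congr rfl fun y _ => ?_
        apply tt
        · rintro rfl; simp only [lt_irrefl, and_false, false_and, and_not_self, if_false, add_zero, mul_zero]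
        · ring
      · refine sum_congr rfl fun x _ => ?_
        by_cases h : (x : Fin n) < a
        · simp only [h, not_true, false_and, and_false, true_and, and_true, if_true, if_false]; ring
        · simp only [h, not_false_iff, false_and, and_false, true_and, and_true, if_true, if_false]; ring

theorem s14_trip (k : ℕ) (f : Fin (k + 3) → Fin (k + 3) → Fin (k + 3) → ℚ) :
    ∑ x ∈ (univ : Finset (Fin (k + 3) × Fin (k + 3) × Fin (k + 3))).filter
      (fun x => (x.1 : ℕ) + 1 = (x.2.1 : ℕ) ∧ (x.2.1 : ℕ) + 1 = (x.2.2 : ℕ)), f x.1 x.2.1 x.2.2 =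
    ∑ i : Fin (k + 1), f ⟨i, by omega⟩ ⟨i + 1, by omega⟩ ⟨i + 2, by omega⟩ := by
  symm
  refine sum_bij (fun i _ => (⟨i, by omega⟩, ⟨i + 1, by omega⟩, ⟨i + 2, by omega⟩)) ?_ ?_ ?_ ?_
  · intro i _; simp
  · intro i _ j _ h
    simp only [Prod.mk.injEq, Fin.mk.injEq] at h
    exact Fin.ext h.1
  · rintro ⟨x, y, z⟩ h
    simp only [mem_filter, mem_univ, true_and] at h
    refine ⟨⟨x, by omega⟩, mem_univ _, ?_⟩
    simp only [Prod.mk.injEq, Fin.ext_iff]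
    refine ⟨trivial, ?_, ?_⟩
    · exact h.1
    · rw [← h.2, ← h.1]
  · intro i _; rfl

theorem s14_sumid (k : ℕ) : ∑ i : Fin (k + 1), ((i : ℕ) : ℚ) = k * (k + 1) / 2 := by
  rw [Fin.sum_univ_eq_sum_range (fun i => (i : ℚ))]
  induction k with
  | zero => simp
  | succ k ih => rw [sum_range_succ, ih]; push_cast; ring

theorem s14_sw (k : ℕ) (C : Finset (Perm (Fin (k + 3))))
    (P : Perm (Fin (k + 3)) → Fin (k + 3) → Fin (k + 3) → Fin (k + 3) → Prop)
    [∀ π x y z, Decidable (P π x y z)] (A B : ℚ)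
    (h : ∀ a b c : Fin (k + 3), (a : ℕ) + 1 = b → (b : ℕ) + 1 = c →
      ∑ π ∈ C, (if P π a b c then 1 else 0 : ℚ) = A + (a : ℕ) * B) :
    ∑ π ∈ C, ((((univ : Finset (Fin (k + 3) × Fin (k + 3) × Fin (k + 3))).filter fun x =>
      (x.1 : ℕ) + 1 = (x.2.1 : ℕ) ∧ (x.2.1 : ℕ) + 1 = (x.2.2 : ℕ) ∧ P π x.1 x.2.1 x.2.2).card : ℚ)) =
      (k + 1) * A + k * (k + 1) / 2 * B := by
  have h1 : ∀ π ∈ C, ((((univ : Finset (Fin (k + 3) × Fin (k + 3) × Fin (k + 3))).filter fun x =>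
      (x.1 : ℕ) + 1 = (x.2.1 : ℕ) ∧ (x.2.1 : ℕ) + 1 = (x.2.2 : ℕ) ∧ P π x.1 x.2.1 x.2.2).card : ℚ)) =
      ∑ i : Fin (k + 1), if P π ⟨i, by omega⟩ ⟨i + 1, by omega⟩ ⟨i + 2, by omega⟩ then 1 else 0 := by
    intro π _
    rw [← s14_trip k (fun a b c => if P π a b c then 1 else 0), sum_boole, filter_filter]
    simp only [and_assoc]
  rw [sum_congr rfl h1, sum_comm]
  have h2 : ∀ i : Fin (k + 1), ∑ π ∈ C, (if P π ⟨i, by omega⟩ ⟨i + 1, by omega⟩ ⟨i + 2, by omega⟩ then 1 else 0 : ℚ)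
      = A + (i : ℕ) * B := fun i => h _ _ _ rfl rfl
  simp only [h2, sum_add_distrib, sum_const, card_univ, Fintype.card_fin, nsmul_eq_mul, ← sum_mul, s14_sumid]
  push_cast; ring

theorem s14_conj (n : ℕ) (lam : n.Partition) (σ π : Perm (Fin n)) (h : π ∈ conjClass n lam) :
    σ * π * σ⁻¹ ∈ conjClass n lam := by
  simp only [conjClass, mem_filter, mem_univ, true_and] at *
  rw [← h]
  congr 1
  refine (Equiv.Perm.partition_eq_of_isConj.1 ?_).symm
  exact isConj_iff.2 ⟨σ, rfl⟩

theorem s14_hp (n : ℕ) (lam : n.Partition) (π : Perm (Fin n)) (h : π ∈ conjClass n lam) :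
    (∑ u, (if π u = u then 1 else 0 : ℚ) = lam.parts.count 1) ∧
    (∑ u, (if π u ≠ u ∧ π (π u) = u then 1 else 0 : ℚ) = 2 * lam.parts.count 2) ∧
    (∑ u, (if π u ≠ u ∧ π (π (π u)) = u then 1 else 0 : ℚ) = 3 * lam.parts.count 3) := by
  simp only [conjClass, mem_filter, mem_univ, true_and] at h
  have h1 := s14_fix π
  have h2 := s14_cyc π 2 Nat.prime_two
  have h3 := s14_cyc π 3 Nat.prime_three
  rw [h] at h1 h2 h3
  simp only [pow_succ, pow_zero, one_mul, Perm.mul_apply] at h2 h3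
  refine ⟨?_, ?_, ?_⟩
  · rw [sum_boole, h1]
  · rw [sum_boole, h2]; push_cast; ring
  · rw [sum_boole, h3]; push_cast; ring

theorem s14_alg (k C p q r n0 nf nm nff nfm np ns fff fsw cyc : ℚ) (hk : 0 ≤ k)
   (e1 : C = k * (k - 1) * (k - 2) * n0 + k * (k - 1) * (3 * nf + 6 * nm) +
      k * (3 * nff + 6 * nfm + 6 * np + 3 * ns) + fff + 3 * fsw + 2 * cyc)
   (e2 : (k + 3) * (k + 2) * (k + 1) * (k * (k - 1) * nf + 2 * k * nff + 2 * k * nfm + fff + fsw) = C * (p * (k + 2) * (k + 1)))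
   (e3 : (k + 3) * (k + 2) * (k + 1) * (k * (k - 1) * nm + k * (ns + 2 * np + nfm) + fsw + cyc) = C * ((k + 3 - p) * (k + 1)))
   (e4 : (k + 3) * (k + 2) * (k + 1) * (k * nff + fff) = C * (p * (p - 1) * (k + 1)))
   (e5 : (k + 3) * (k + 2) * (k + 1) * (k * ns + fsw) = C * (2 * q * (k + 1)))
   (e6 : (k + 3) * (k + 2) * (k + 1) * (k * np + cyc) = C * (k + 3 - p - 2 * q))
   (e7 : (k + 3) * (k + 2) * (k + 1) * (k * nfm + fsw) = C * (p * (k + 3 - p)))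
   (e8 : (k + 3) * (k + 2) * (k + 1) * fff = C * (p * (p - 1) * (p - 2)))
   (e9 : (k + 3) * (k + 2) * (k + 1) * fsw = C * (p * (2 * q)))
   (e10 : (k + 3) * (k + 2) * (k + 1) * cyc = C * (3 * r)) :
   (k + 1) * (n0 * (k * (k - 1) * (k - 2) / 6) + (nf + 2 * nm) * (k * (k - 1) / 2) + cyc)
      + k * (k + 1) / 2 * (nff + nfm + 3 * np + ns) =
   C * ((k + 1) / 6 - (p - 1) / (2 * (k + 3))
          - ((p - 1) * (p - 2) / 2 + q - 1) / (2 * (k + 3) * (k + 2)) + ((p - 1) * (p - 2) / 2 - q) / (2 * (k + 3) * (k + 2))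
          - ((p - 1) * (p - 2) * (p - 3) / 3 - p - r + 2) / (2 * (k + 3) * (k + 2))) := by
  have a1 : k + 1 ≠ 0 := by positivity
  have a2 : k + 2 ≠ 0 := by positivity
  have a3 : k + 3 ≠ 0 := by positivity
  have hN : (k + 3) * (k + 2) * (k + 1) ≠ 0 := by positivity
  have b0 : k * (k - 1) * (k - 2) * n0 = C - (k * (k - 1) * (3 * nf + 6 * nm) +
      k * (3 * nff + 6 * nfm + 6 * np + 3 * ns) + fff + 3 * fsw + 2 * cyc) := by linarith
  rw [mul_comm, ← eq_div_iff hN] at e2 e3 e4 e5 e6 e7 e8 e9 e10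
  have b1 : k * (k - 1) * nf = C * (p * (k + 2) * (k + 1)) / ((k + 3) * (k + 2) * (k + 1)) - 
    (2 * (k * nff) + 2 * (k * nfm) + fff + fsw) := by linarith
  have b2 : k * (k - 1) * nm = C * ((k + 3 - p) * (k + 1)) / ((k + 3) * (k + 2) * (k + 1)) - 
    (k * ns + 2 * (k * np) + k * nfm + fsw + cyc) := by linarith
  have b3 := eq_sub_of_add_eq e4
  have b4 := eq_sub_of_add_eq e5
  have b5 := eq_sub_of_add_eq e6
  have b6 := eq_sub_of_add_eq e7
  have : (k + 1) * (n0 * (k * (k - 1) * (k - 2) / 6) + (nf + 2 * nm) * (k * (k - 1) / 2) + cyc)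
      + k * (k + 1) / 2 * (nff + nfm + 3 * np + ns) = (k + 1) * ((k * (k - 1) * (k - 2) * n0) / 6 
      + (k * (k - 1) * nf + 2 * (k * (k - 1) * nm)) / 2 + cyc + (k * nff + k * nfm + 3 * (k * np) + k * ns) / 2) := by ring
  rw [this, b0]
  have : k * (k - 1) * (3 * nf + 6 * nm) +
      k * (3 * nff + 6 * nfm + 6 * np + 3 * ns) = 3 * (k * (k - 1) * nf) + 6 * (k * (k - 1) * nm) + 
      3 * (k * nff) + 6 * (k * nfm) + 6 * (k * np) + 3 * (k * ns) := by ring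
  rw [this, b1, b2, b3, b4, b5, b6, e8, e9, e10]
  field_simp
  ring

theorem stmt14 (n : ℕ) (hn : 3 ≤ n) (lam : n.Partition)
    (p q r X₁ X₂ X₃ X₄ : ℚ)
    (hp : p = (lam.parts.count 1 : ℚ)) (hq : q = (lam.parts.count 2 : ℚ))
    (hr : r = (lam.parts.count 3 : ℚ))
    (hX1 : X₁ = p - 1) (hX2 : X₂ = (p - 1) * (p - 2) / 2 + q - 1)
    (hX3 : X₃ = (p - 1) * (p - 2) / 2 - q)
    (hX4 : X₄ = (p - 1) * (p - 2) * (p - 3) / 3 - p - r + 2) :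
    ((∑ π ∈ conjClass n lam,
      ((((Finset.univ : Finset (Fin n × Fin n × Fin n)).filter fun x =>
          (x.1 : ℕ) + 1 = (x.2.1 : ℕ) ∧ (x.2.1 : ℕ) + 1 = (x.2.2 : ℕ) ∧ π x.2.2 < π x.1 ∧ π x.1 < π x.2.1).card : ℚ)))
      = ((conjClass n lam).card : ℚ) *
        (((n : ℚ) - 2) / 6 - X₁ / (2 * (n : ℚ))
          - X₂ / (2 * (n : ℚ) * ((n : ℚ) - 1)) + X₃ / (2 * (n : ℚ) * ((n : ℚ) - 1))
          - X₄ / (2 * (n : ℚ) * ((n : ℚ) - 1)))) ∧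
    ((∑ π ∈ conjClass n lam,
      ((((Finset.univ : Finset (Fin n × Fin n × Fin n)).filter fun x =>
          (x.1 : ℕ) + 1 = (x.2.1 : ℕ) ∧ (x.2.1 : ℕ) + 1 = (x.2.2 : ℕ) ∧ π x.2.1 < π x.2.2 ∧ π x.2.2 < π x.1).card : ℚ)))
      = ((conjClass n lam).card : ℚ) *
        (((n : ℚ) - 2) / 6 - X₁ / (2 * (n : ℚ))
          - X₂ / (2 * (n : ℚ) * ((n : ℚ) - 1)) + X₃ / (2 * (n : ℚ) * ((n : ℚ) - 1))
          - X₄ / (2 * (n : ℚ) * ((n : ℚ) - 1)))) := by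
  obtain ⟨k, rfl⟩ : ∃ k, n = k + 3 := ⟨n - 3, by omega⟩
  have hC := s14_conj (k + 3) lam
  obtain ⟨n0, nf, nm, nff, nfm, np, ns, fff, fsw, cyc, K⟩ := s14_consts _ hC
  have H := s14_hp (k + 3) lam
  have hk : (k : ℚ) = ((k + 3 : ℕ) : ℚ) - 3 := by push_cast; ring
  have d1 : (⟨0, by omega⟩ : Fin (k + 3)) ≠ ⟨1, by omega⟩ := by simp [Fin.ext_iff]
  have d2 : (⟨0, by omega⟩ : Fin (k + 3)) ≠ ⟨2, by omega⟩ := by simp [Fin.ext_iff]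
  have d3 : (⟨1, by omega⟩ : Fin (k + 3)) ≠ ⟨2, by omega⟩ := by simp [Fin.ext_iff]
  obtain ⟨e1, e2, e3, e4, e5, e6, e7, e8, e9, e10⟩ :=
    s14_marg _ hC K _ _ _ d1 d2 d3 p q r k ((k + 3) * (k + 2) * (k + 1)) hk
      (by push_cast; ring) (fun π h => by rw [(H π h).1, hp]) (fun π h => by rw [(H π h).2.1, hq])
      (fun π h => by rw [(H π h).2.2, hr])
  have E := fun (a b c : Fin (k + 3)) (hab : (a : ℕ) + 1 = b) (hbc : (b : ℕ) + 1 = c) =>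
    s14_E1 _ K a b c hab hbc k hk (s14_cardO a b c (by simp only [ne_eq, Fin.ext_iff]; omega)
      (by simp only [ne_eq, Fin.ext_iff]; omega) (by simp only [ne_eq, Fin.ext_iff]; omega))
  have c1 : ((k + 3 : ℕ) : ℚ) = (k : ℚ) + 3 := by push_cast; ring
  have c2 : (k : ℚ) + 3 - 2 = k + 1 := by ring
  have c3 : (k : ℚ) + 3 - 1 = k + 2 := by ring
  simp only [c1, c2, c3] at e2 e3 e4 e5 e6 e7 e8 e9 e10 ⊢
  have alg := s14_alg k _ p q r n0 nf nm nff nfm np ns fff fsw cyc (Nat.cast_nonneg k)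
    e1 e2 e3 e4 e5 e6 e7 e8 e9 e10
  rw [hX1, hX2, hX3, hX4, ← alg]
  constructor
  · rw [s14_sw k _ (fun π x y z => π z < π x ∧ π x < π y)
      (n0 * (k * (k - 1) * (k - 2) / 6) + (nf + 2 * nm) * (k * (k - 1) / 2) + k * (2 * np + ns) + cyc)
      (nff + nfm - np - ns)]
    · ring
    · intro a b c hab hbc
      rw [(E a b c hab hbc).1]; ring
  · rw [s14_sw k _ (fun π x y z => π y < π z ∧ π z < π x)
      (n0 * (k * (k - 1) * (k - 2) / 6) + (nf + 2 * nm) * (k * (k - 1) / 2) + k * (nff + nfm + np) + cyc)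
      (np + ns - nff - nfm)]
    · ring
    · intro a b c hab hbc
      rw [(E a b c hab hbc).2]; ring
end

section
/- Let n ≥ 3 and let λ be a partition of n. Then Σ_{π ∈ C_λ} occ₍₁₂₋₃₎(π) = |C_λ| · ( C(n−1,2)/6 + (n²+3n−6)·X₁/(12n) + (n+2)·X₂/(12n) + (5n−6)·X₃/(12n) + X₄/(4n) ), where occ₍₁₂₋₃₎(π) = #{(i,k) : 1 ≤ i, i+1 < k ≤ n, π(i) < π(i+1) < π(k)} is the number of occurrences of the vincular pattern (12-3) in π. -/
open Equiv Finset

lemma cyc_prime_iff {n : ℕ} (π : Perm (Fin n)) (k : ℕ) (hk : k.Prime) (x : Fin n) :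
    #(π.cycleOf x).support = k ↔ (π ^ k) x = x ∧ π x ≠ x := by
  by_cases hx : π x = x
  · have : (π.cycleOf x) = 1 := by rwa [Perm.cycleOf_eq_one_iff]
    simp [this, hx, hk.pos.ne]
  · have hmem : x ∈ (π.cycleOf x).support := by
      rw [Perm.mem_support_cycleOf_iff]
      exact ⟨Perm.SameCycle.refl _ _, by simpa using hx⟩
    rw [(Perm.isCycleOn_support_cycleOf π x).pow_apply_eq hmem, Nat.dvd_prime hk]
    have := Perm.two_le_card_support_cycleOf_iff.2 hx
    constructor
    · intro h; exact ⟨Or.inr h, hx⟩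
    · rintro ⟨h | h, _⟩
      · omega
      · exact h

lemma cyc_card {n : ℕ} (π : Perm (Fin n)) (k : ℕ) (hk : k.Prime) :
    #{x : Fin n | (π ^ k) x = x ∧ π x ≠ x} = k * π.cycleType.count k := by
  have h1 : #{x : Fin n | (π ^ k) x = x ∧ π x ≠ x}
      = ∑ c ∈ π.cycleFactorsFinset.filter (fun c => #c.support = k),
        #{x ∈ ({x : Fin n | (π ^ k) x = x ∧ π x ≠ x} : Finset (Fin n)) | π.cycleOf x = c} := by
    apply Finset.card_eq_sum_card_fiberwise
    intro x hx
    simp only [Finset.coe_filter, Finset.mem_univ, true_and, Set.mem_ofPred_eq] at hx ⊢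
    refine ⟨?_, (cyc_prime_iff π k hk x).2 hx⟩
    rw [Perm.cycleOf_mem_cycleFactorsFinset_iff]
    simpa using hx.2
  rw [h1, Finset.sum_congr rfl (g := fun _ => k)]
  · rw [Finset.sum_const, smul_eq_mul, mul_comm, Perm.cycleType_def, Multiset.count_map]
    congr 1
    rw [Finset.card_def, Finset.filter_val]
    congr 2
    ext; simp [eq_comm]
  · intro c hc
    rw [Finset.mem_filter] at hc
    conv_rhs => rw [← hc.2]
    congr 1
    ext x
    simp only [Finset.mem_filter, Finset.mem_univ, true_and]
    rw [← cyc_prime_iff π k hk, ← Perm.eq_cycleOf_of_mem_cycleFactorsFinset_iff π c hc.1]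
    constructor
    · intro h; exact h.2.symm
    · rintro rfl; exact ⟨hc.2, rfl⟩

lemma cls_count {n : ℕ} {lam : n.Partition} {π : Perm (Fin n)} (h : π ∈ conjClass n lam) :
    #{x : Fin n | π x = x} = lam.parts.count 1 ∧
    #{x : Fin n | π (π x) = x ∧ π x ≠ x} = 2 * lam.parts.count 2 ∧
    #{x : Fin n | π (π (π x)) = x ∧ π x ≠ x} = 3 * lam.parts.count 3 := by
  simp only [conjClass, Finset.mem_filter, Finset.mem_univ, true_and] at h
  rw [← h, Perm.parts_partition]
  have c1 : π.cycleType.count 1 = 0 := by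
    rw [Multiset.count_eq_zero]
    intro h1
    have := Perm.two_le_of_mem_cycleType h1
    omega
  have e2 := cyc_card π 2 Nat.prime_two
  have e3 := cyc_card π 3 Nat.prime_three
  simp only [pow_succ, pow_zero, one_mul, Perm.mul_apply] at e2 e3
  refine ⟨?_, ?_, ?_⟩
  · rw [Multiset.count_add, c1, Multiset.count_replicate_self, zero_add, ← Finset.card_compl]
    congr 1
    ext x; simp
  · rw [e2, Multiset.count_add, Multiset.count_replicate]; simp
  · rw [e3, Multiset.count_add, Multiset.count_replicate]; simp

lemma cls_conj {n : ℕ} {lam : n.Partition} (σ : Perm (Fin n)) {π : Perm (Fin n)} :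
    σ * π * σ⁻¹ ∈ conjClass n lam ↔ π ∈ conjClass n lam := by
  simp only [conjClass, Finset.mem_filter, Finset.mem_univ, true_and]
  have : Perm.partition π = Perm.partition (σ * π * σ⁻¹) :=
    Perm.partition_eq_of_isConj.1 (isConj_iff.2 ⟨σ, rfl⟩)
  rw [this]

/-- number of class members with three prescribed values -/
def FF {n : ℕ} (C : Finset (Perm (Fin n))) (a b c x y z : Fin n) : ℚ :=
  ∑ π ∈ C, if π a = x ∧ π b = y ∧ π c = z then 1 else 0

lemma FF_inv {n : ℕ} (lam : n.Partition) (σ : Perm (Fin n)) (a b c x y z : Fin n) :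
    FF (conjClass n lam) (σ a) (σ b) (σ c) (σ x) (σ y) (σ z)
      = FF (conjClass n lam) a b c x y z := by
  unfold FF
  symm
  apply Finset.sum_bij (fun π _ => σ * π * σ⁻¹)
  · intro π h; exact cls_conj σ |>.2 h
  · intro π _ π' _ h; simpa using h
  · intro π h
    refine ⟨σ⁻¹ * π * σ, ?_, by simp [mul_assoc]⟩
    rw [← cls_conj σ]; simpa [mul_assoc] using h
  · intro π _; simp [Perm.mul_apply]

lemma ex_const {n m : ℕ} (Φ : (Fin m → Fin n) → ℚ)
    (h : ∀ (σ : Perm (Fin n)) f, Φ (fun i => σ (f i)) = Φ f) :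
    ∃ N : ℚ, ∀ f : Fin m → Fin n, (List.ofFn f).Nodup → Φ f = N := by
  simp only [List.nodup_ofFn]
  by_cases hf : ∃ f : Fin m → Fin n, Function.Injective f
  · obtain ⟨f, hf⟩ := hf
    refine ⟨Φ f, fun g hg => ?_⟩
    obtain ⟨σ, hσ⟩ := Equiv.Perm.exists_extending_pair f g hf hg
    rw [← h σ f]
    congr 1
    ext i; rw [hσ]
  · exact ⟨0, fun f h => (hf ⟨f, h⟩).elim⟩

lemma FF_s12 {n : ℕ} (C : Finset (Perm (Fin n))) (a b c x y z : Fin n) :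
    FF C a b c x y z = FF C b a c y x z := by
  unfold FF; congr 1; ext π; congr 1; simp only [eq_iff_iff]; tauto
lemma FF_s23 {n : ℕ} (C : Finset (Perm (Fin n))) (a b c x y z : Fin n) :
    FF C a b c x y z = FF C a c b x z y := by
  unfold FF; congr 1; ext π; congr 1; simp only [eq_iff_iff]; tauto
lemma FF_d {n : ℕ} (C : Finset (Perm (Fin n))) (a b x y : Fin n) :
    FF C a b b x y y = FF C a a b x x y := by
  unfold FF; congr 1; ext π; congr 1; simp only [eq_iff_iff]; tauto
lemma FF_z {n : ℕ} (C : Finset (Perm (Fin n))) (a b c x y z : Fin n) 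
    (h : a ≠ c) (hx : x = z) : FF C a b c x y z = 0 := by
  unfold FF; apply Finset.sum_eq_zero; intro π _
  rw [if_neg]; rintro ⟨h1, _, h3⟩
  exact h (π.injective (by rw [h1, h3, hx]))
lemma FF_marg {n : ℕ} (C : Finset (Perm (Fin n))) (a b c x y : Fin n) :
    ∑ z, FF C a b c x y z = FF C a b b x y y := by
  unfold FF
  rw [Finset.sum_comm]; congr 1; ext π
  by_cases h : π a = x ∧ π b = y
  · simp [h.1, h.2]
  · rw [if_neg (by tauto)]
    apply Finset.sum_eq_zero; intro z _
    rw [if_neg (by tauto)]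
lemma FF_marg1 {n : ℕ} (C : Finset (Perm (Fin n))) (a : Fin n) :
    ∑ z, FF C a a a z z z = #C := by
  unfold FF
  rw [Finset.sum_comm]; simp

lemma sum_split {n : ℕ} (s : Finset (Fin n)) (g : Fin n → ℚ) (A : ℚ) (h : ∀ z, z ∉ s → g z = A) :
    ∑ z, g z = ∑ z ∈ s, g z + (n - #s) * A := by
  rw [← Finset.sum_add_sum_compl s g]
  congr 1
  rw [Finset.sum_congr rfl (g := fun _ => A), Finset.sum_const, Finset.card_compl, nsmul_eq_mul,
    Nat.cast_sub (Finset.card_le_univ _)]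
  · simp
  · intro z hz; exact h z (by simpa using hz)

/-- the constants attached to the ten (plus seven smaller) patterns -/
structure Cst {n : ℕ} (C : Finset (Perm (Fin n))) where
  (A B D E G H I J K L Q1 R1 Q2 T U V W : ℚ)
  hQ1 : ∀ a, [a].Nodup → FF C a a a a a a = Q1
  hR1 : ∀ a b, [a, b].Nodup → FF C a a a b b b = R1
  hQ2 : ∀ a b, [a, b].Nodup → FF C a a b a a b = Q2
  hT : ∀ a b, [a, b].Nodup → FF C a a b b b a = T
  hU : ∀ a b c, [a, b, c].Nodup → FF C a a b a a c = U
  hV : ∀ a b c, [a, b, c].Nodup → FF C a a b b b c = V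
  hW : ∀ a b c d, [a, b, c, d].Nodup → FF C a a b c c d = W
  hA : ∀ a b c x y z, [a, b, c, x, y, z].Nodup → FF C a b c x y z = A
  hB : ∀ a b c y z, [a, b, c, y, z].Nodup → FF C a b c a y z = B
  hD : ∀ a b c x z, [a, b, c, x, z].Nodup → FF C a b c b x z = D
  hE : ∀ a b c z, [a, b, c, z].Nodup → FF C a b c a b z = E
  hG : ∀ a b c z, [a, b, c, z].Nodup → FF C a b c a c z = G
  hH : ∀ a b c z, [a, b, c, z].Nodup → FF C a b c b a z = H
  hI : ∀ a b c z, [a, b, c, z].Nodup → FF C a b c b c z = I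
  hJ : ∀ a b c, [a, b, c].Nodup → FF C a b c a b c = J
  hK : ∀ a b c, [a, b, c].Nodup → FF C a b c b a c = K
  hL : ∀ a b c, [a, b, c].Nodup → FF C a b c b c a = L

lemma exCst {n : ℕ} (lam : n.Partition) : Nonempty (Cst (conjClass n lam)) := by
  have gen : ∀ {m : ℕ} (i1 i2 i3 i4 i5 i6 : Fin m), ∃ N : ℚ, ∀ f : Fin m → Fin n,
      (List.ofFn f).Nodup → FF (conjClass n lam) (f i1) (f i2) (f i3) (f i4) (f i5) (f i6) = N := by
    intro m i1 i2 i3 i4 i5 i6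
    exact ex_const (fun f => FF (conjClass n lam) (f i1) (f i2) (f i3) (f i4) (f i5) (f i6))
      (fun σ f => FF_inv lam σ _ _ _ _ _ _)
  obtain ⟨A, hA⟩ := gen (m := 6) 0 1 2 3 4 5
  obtain ⟨B, hB⟩ := gen (m := 5) 0 1 2 0 3 4
  obtain ⟨D, hD⟩ := gen (m := 5) 0 1 2 1 3 4
  obtain ⟨E, hE⟩ := gen (m := 4) 0 1 2 0 1 3
  obtain ⟨G, hG⟩ := gen (m := 4) 0 1 2 0 2 3
  obtain ⟨H, hH⟩ := gen (m := 4) 0 1 2 1 0 3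
  obtain ⟨I, hI⟩ := gen (m := 4) 0 1 2 1 2 3
  obtain ⟨J, hJ⟩ := gen (m := 3) 0 1 2 0 1 2
  obtain ⟨K, hK⟩ := gen (m := 3) 0 1 2 1 0 2
  obtain ⟨L, hL⟩ := gen (m := 3) 0 1 2 1 2 0
  obtain ⟨Q1, hQ1⟩ := gen (m := 1) 0 0 0 0 0 0
  obtain ⟨R1, hR1⟩ := gen (m := 2) 0 0 0 1 1 1
  obtain ⟨Q2, hQ2⟩ := gen (m := 2) 0 0 1 0 0 1
  obtain ⟨T, hT⟩ := gen (m := 2) 0 0 1 1 1 0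
  obtain ⟨U, hU⟩ := gen (m := 3) 0 0 1 0 0 2
  obtain ⟨V, hV⟩ := gen (m := 3) 0 0 1 1 1 2
  obtain ⟨W, hW⟩ := gen (m := 4) 0 0 1 2 2 3
  exact ⟨⟨A, B, D, E, G, H, I, J, K, L, Q1, R1, Q2, T, U, V, W,
    fun a h => hQ1 ![a] h, fun a b h => hR1 ![a, b] h, fun a b h => hQ2 ![a, b] h,
    fun a b h => hT ![a, b] h, fun a b c h => hU ![a, b, c] h, fun a b c h => hV ![a, b, c] h,
    fun a b c d h => hW ![a, b, c, d] h,
    fun a b c x y z h => hA ![a, b, c, x, y, z] h,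
    fun a b c x y h => hB ![a, b, c, x, y] h,
    fun a b c x y h => hD ![a, b, c, x, y] h,
    fun a b c x h => hE ![a, b, c, x] h,
    fun a b c x h => hG ![a, b, c, x] h,
    fun a b c x h => hH ![a, b, c, x] h,
    fun a b c x h => hI ![a, b, c, x] h,
    fun a b c h => hJ ![a, b, c] h,
    fun a b c h => hK ![a, b, c] h,
    fun a b c h => hL ![a, b, c] h⟩⟩

lemma ex_pts {n m : ℕ} (h : m ≤ n) : ∃ f : Fin m → Fin n, (List.ofFn f).Nodup :=
  ⟨Fin.castLE h, by rw [List.nodup_ofFn]; exact Fin.castLE_injective h⟩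


lemma ex3 {n : ℕ} (h : 3 ≤ n) : ∃ a b c : Fin n, [a, b, c].Nodup := by
  obtain ⟨f, hf⟩ := ex_pts h
  exact ⟨f 0, f 1, f 2, hf⟩
lemma ex4 {n : ℕ} (h : 4 ≤ n) : ∃ a b c d : Fin n, [a, b, c, d].Nodup := by
  obtain ⟨f, hf⟩ := ex_pts h
  exact ⟨f 0, f 1, f 2, f 3, hf⟩
lemma ex5 {n : ℕ} (h : 5 ≤ n) : ∃ a b c d e : Fin n, [a, b, c, d, e].Nodup := by
  obtain ⟨f, hf⟩ := ex_pts h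
  exact ⟨f 0, f 1, f 2, f 3, f 4, hf⟩

lemma sum_splitL {n : ℕ} (l : List (Fin n)) (hl : l.Nodup) (g : Fin n → ℚ) (A : ℚ)
    (h : ∀ z, (z :: l).Nodup → g z = A) :
    ∑ z, g z = (l.map g).sum + (n - l.length) * A := by
  rw [sum_split l.toFinset g A, List.sum_toFinset _ hl, List.toFinset_card_of_nodup hl]
  intro z hz
  exact h z (by simp at hz; simp [hz, hl])

section margs
variable {n : ℕ} {C : Finset (Perm (Fin n))} (k : Cst C)
lemma mR (hn : 3 ≤ n) : (n - 1 : ℚ) * k.R1 = #C - k.Q1 := by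
  obtain ⟨a, b, c, h⟩ := ex3 hn
  have := sum_splitL [a] (by simp) (fun z => FF C a a a z z z) k.R1
    (fun z hz => k.hR1 _ _ (by grind))
  rw [FF_marg1] at this
  simp [k.hQ1] at this
  linarith
lemma mU (hn : 3 ≤ n) : (n - 2 : ℚ) * k.U = k.Q1 - k.Q2 := by
  obtain ⟨a, b, c, h⟩ := ex3 hn
  have := sum_splitL [a, b] (by grind) (fun z => FF C a a b a a z) k.U
    (fun z hz => k.hU _ _ _ (by grind))
  rw [FF_marg] at this
  have e0 : FF C a a a a a a = k.Q1 := k.hQ1 _ (by grind)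
  have e1 : FF C a a b a a a = 0 := FF_z _ _ _ _ _ _ _ (by grind) rfl
  have e2 : FF C a a b a a b = k.Q2 := k.hQ2 _ _ (by grind)
  simp [e0, e1, e2] at this
  linarith
lemma mV (hn : 3 ≤ n) : (n - 2 : ℚ) * k.V = k.R1 - k.T := by
  obtain ⟨a, b, c, h⟩ := ex3 hn
  have := sum_splitL [a, b] (by grind) (fun z => FF C a a b b b z) k.V
    (fun z hz => k.hV _ _ _ (by grind))
  rw [FF_marg] at this
  have e0 : FF C a a a b b b = k.R1 := k.hR1 _ _ (by grind)
  have e1 : FF C a a b b b b = 0 := FF_z _ _ _ _ _ _ _ (by grind) rfl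
  have e2 : FF C a a b b b a = k.T := k.hT _ _ (by grind)
  simp [e0, e1, e2] at this
  linarith
lemma mW (hn : 3 ≤ n) : (n - 3 : ℚ) * k.W = k.R1 - k.V - k.U := by
  obtain ⟨a, b, c, h⟩ := ex3 hn
  have := sum_splitL [a, b, c] (by grind) (fun z => FF C a a b c c z) k.W
    (fun z hz => k.hW _ _ _ _ (by grind))
  rw [FF_marg] at this
  have e0 : FF C a a a c c c = k.R1 := k.hR1 _ _ (by grind)
  have e1 : FF C a a b c c c = 0 := FF_z _ _ _ _ _ _ _ (by grind) rfl
  have e2 : FF C a a b c c a = k.V := by rw [FF_s23, FF_s12, FF_d]; exact k.hV _ _ _ (by grind)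
  have e3 : FF C a a b c c b = k.U := by rw [FF_s23, FF_s12, FF_d]; exact k.hU _ _ _ (by grind)
  simp [e0, e1, e2, e3] at this
  linarith
lemma mE (hn : 3 ≤ n) : (n - 3 : ℚ) * k.E = k.Q2 - k.J := by
  obtain ⟨a, b, c, h⟩ := ex3 hn
  have := sum_splitL [a, b, c] (by grind) (fun z => FF C a b c a b z) k.E
    (fun z hz => k.hE _ _ _ _ (by grind))
  rw [FF_marg] at this
  have e0 : FF C a b b a b b = k.Q2 := by rw [FF_d]; exact k.hQ2 _ _ (by grind)
  have e1 : FF C a b c a b a = 0 := FF_z _ _ _ _ _ _ _ (by grind) rfl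
  have e2 : FF C a b c a b b = 0 := by rw [FF_s12]; exact FF_z _ _ _ _ _ _ _ (by grind) rfl
  have e3 : FF C a b c a b c = k.J := k.hJ _ _ _ (by grind)
  simp [e0, e1, e2, e3] at this
  linarith
lemma mH (hn : 3 ≤ n) : (n - 3 : ℚ) * k.H = k.T - k.K := by
  obtain ⟨a, b, c, h⟩ := ex3 hn
  have := sum_splitL [a, b, c] (by grind) (fun z => FF C a b c b a z) k.H
    (fun z hz => k.hH _ _ _ _ (by grind))
  rw [FF_marg] at this
  have e0 : FF C a b b b a a = k.T := by rw [FF_d]; exact k.hT _ _ (by grind)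
  have e1 : FF C a b c b a b = 0 := FF_z _ _ _ _ _ _ _ (by grind) rfl
  have e2 : FF C a b c b a a = 0 := by rw [FF_s12]; exact FF_z _ _ _ _ _ _ _ (by grind) rfl
  have e3 : FF C a b c b a c = k.K := k.hK _ _ _ (by grind)
  simp [e0, e1, e2, e3] at this
  linarith
lemma mI (hn : 3 ≤ n) : (n - 3 : ℚ) * k.I = k.V - k.L := by
  obtain ⟨a, b, c, h⟩ := ex3 hn
  have := sum_splitL [a, b, c] (by grind) (fun z => FF C a b c b c z) k.I
    (fun z hz => k.hI _ _ _ _ (by grind))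
  rw [FF_marg] at this
  have e0 : FF C a b b b c c = k.V := by rw [FF_d]; exact k.hV _ _ _ (by grind)
  have e1 : FF C a b c b c b = 0 := FF_z _ _ _ _ _ _ _ (by grind) rfl
  have e2 : FF C a b c b c c = 0 := by rw [FF_s12]; exact FF_z _ _ _ _ _ _ _ (by grind) rfl
  have e3 : FF C a b c b c a = k.L := k.hL _ _ _ (by grind)
  simp [e0, e1, e2, e3] at this
  linarith
lemma mG (hn : 3 ≤ n) : (n - 3 : ℚ) * k.G = k.U - k.K := by
  obtain ⟨a, b, c, h⟩ := ex3 hn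
  have := sum_splitL [a, b, c] (by grind) (fun z => FF C a b c a c z) k.G
    (fun z hz => k.hG _ _ _ _ (by grind))
  rw [FF_marg] at this
  have e0 : FF C a b b a c c = k.U := by rw [FF_d]; exact k.hU _ _ _ (by grind)
  have e1 : FF C a b c a c a = 0 := FF_z _ _ _ _ _ _ _ (by grind) rfl
  have e2 : FF C a b c a c c = 0 := by rw [FF_s12]; exact FF_z _ _ _ _ _ _ _ (by grind) rfl
  have e3 : FF C a b c a c b = k.K := by rw [FF_s12, FF_s23]; exact k.hK _ _ _ (by grind)
  simp [e0, e1, e2, e3] at this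
  linarith
lemma mD (hn : 4 ≤ n) : (n - 4 : ℚ) * k.D = k.V - k.G - k.I := by
  obtain ⟨a, b, c, d, h⟩ := ex4 hn
  have := sum_splitL [a, b, c, d] (by grind) (fun z => FF C a b c b d z) k.D
    (fun z hz => k.hD _ _ _ _ _ (by grind))
  rw [FF_marg] at this
  have e0 : FF C a b b b d d = k.V := by rw [FF_d]; exact k.hV _ _ _ (by grind)
  have e1 : FF C a b c b d b = 0 := FF_z _ _ _ _ _ _ _ (by grind) rfl
  have e2 : FF C a b c b d d = 0 := by rw [FF_s12]; exact FF_z _ _ _ _ _ _ _ (by grind) rfl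
  have e3 : FF C a b c b d c = k.G := by rw [FF_s23, FF_s12]; exact k.hG _ _ _ _ (by grind)
  have e4 : FF C a b c b d a = k.I := by rw [FF_s23, FF_s12]; exact k.hI _ _ _ _ (by grind)
  simp [e0, e1, e2, e3, e4] at this
  linarith
lemma mB (hn : 4 ≤ n) : (n - 4 : ℚ) * k.B = k.U - k.E - k.G := by
  obtain ⟨a, b, c, d, h⟩ := ex4 hn
  have := sum_splitL [a, b, c, d] (by grind) (fun z => FF C a b c a d z) k.B
    (fun z hz => k.hB _ _ _ _ _ (by grind))
  rw [FF_marg] at this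
  have e0 : FF C a b b a d d = k.U := by rw [FF_d]; exact k.hU _ _ _ (by grind)
  have e1 : FF C a b c a d a = 0 := FF_z _ _ _ _ _ _ _ (by grind) rfl
  have e2 : FF C a b c a d d = 0 := by rw [FF_s12]; exact FF_z _ _ _ _ _ _ _ (by grind) rfl
  have e3 : FF C a b c a d c = k.E := by rw [FF_s23]; exact k.hE _ _ _ _ (by grind)
  have e4 : FF C a b c a d b = k.G := by rw [FF_s23]; exact k.hG _ _ _ _ (by grind)
  simp [e0, e1, e2, e3, e4] at this
  linarith
lemma mA (hn : 5 ≤ n) : (n - 5 : ℚ) * k.A = k.W - k.B - 2 * k.D := by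
  obtain ⟨a, b, c, d, e, h⟩ := ex5 hn
  have := sum_splitL [a, b, c, d, e] (by grind) (fun z => FF C a b c d e z) k.A
    (fun z hz => k.hA _ _ _ _ _ _ (by grind))
  rw [FF_marg] at this
  have e0 : FF C a b b d e e = k.W := by rw [FF_d]; exact k.hW _ _ _ _ (by grind)
  have e1 : FF C a b c d e d = 0 := FF_z _ _ _ _ _ _ _ (by grind) rfl
  have e2 : FF C a b c d e e = 0 := by rw [FF_s12]; exact FF_z _ _ _ _ _ _ _ (by grind) rfl
  have e3 : FF C a b c d e c = k.B := by rw [FF_s23, FF_s12]; exact k.hB _ _ _ _ _ (by grind)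
  have e4 : FF C a b c d e a = k.D := by rw [FF_s23, FF_s12]; exact k.hD _ _ _ _ _ (by grind)
  have e5 : FF C a b c d e b = k.D := by rw [FF_s12, FF_s23, FF_s12]; exact k.hD _ _ _ _ _ (by grind)
  simp [e0, e1, e2, e3, e4, e5] at this
  linarith
end margs

lemma if_and3 (P Q R : Prop) [Decidable P] [Decidable Q] [Decidable R] :
    (if P ∧ Q ∧ R then (1 : ℚ) else 0)
      = (if P then 1 else 0) * ((if Q then 1 else 0) * (if R then 1 else 0)) := by
  by_cases P <;> by_cases Q <;> by_cases R <;> simp [*]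

section base
variable {n : ℕ} {lam : n.Partition} (k : Cst (conjClass n lam))

lemma cntp {π : Perm (Fin n)} (h : π ∈ conjClass n lam) :
    (∑ a, if π a = a then (1 : ℚ) else 0) = lam.parts.count 1 := by
  rw [← (cls_count h).1]; simp

lemma cntq {π : Perm (Fin n)} (h : π ∈ conjClass n lam) :
    (∑ a, if π (π a) = a then (1 : ℚ) else 0) = lam.parts.count 1 + 2 * lam.parts.count 2 := by
  have h1 := (cls_count h).1
  have h2 := (cls_count h).2.1
  have : (lam.parts.count 1 : ℚ) + 2 * lam.parts.count 2
    = ((lam.parts.count 1 + 2 * lam.parts.count 2 : ℕ) : ℚ) := by push_cast; ring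
  rw [this, ← h1, ← h2, Finset.card_filter, Finset.card_filter]
  push_cast
  rw [← Finset.sum_add_distrib]
  congr 1; ext a
  by_cases h3 : π a = a
  · simp [h3]
  · simp [h3]

lemma cntr {π : Perm (Fin n)} (h : π ∈ conjClass n lam) :
    (∑ a, if π (π (π a)) = a then (1 : ℚ) else 0) = lam.parts.count 1 + 3 * lam.parts.count 3 := by
  have h1 := (cls_count h).1
  have h2 := (cls_count h).2.2
  have : (lam.parts.count 1 : ℚ) + 3 * lam.parts.count 3
    = ((lam.parts.count 1 + 3 * lam.parts.count 3 : ℕ) : ℚ) := by push_cast; ring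
  rw [this, ← h1, ← h2, Finset.card_filter, Finset.card_filter]
  push_cast
  rw [← Finset.sum_add_distrib]
  congr 1; ext a
  by_cases h3 : π a = a
  · simp [h3]
  · simp [h3]

lemma cls_sum (g : Perm (Fin n) → ℚ) (v : ℚ) (h : ∀ π ∈ conjClass n lam, g π = v) :
    ∑ π ∈ conjClass n lam, g π = #(conjClass n lam) * v := by
  rw [Finset.sum_congr rfl h]; simp

lemma bQ1 : (n : ℚ) * k.Q1 = #(conjClass n lam) * lam.parts.count 1 := by
  have h1 : ∑ a, FF (conjClass n lam) a a a a a a = n * k.Q1 := by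
    simp [k.hQ1]
  rw [← h1]
  unfold FF
  rw [Finset.sum_comm]
  apply cls_sum
  intro π h
  simpa using cntp h

lemma rowQ (a : Fin n) : ∑ c, FF (conjClass n lam) a a c a a c = k.Q1 + (n - 1) * k.Q2 := by
  rw [sum_splitL [a] (by simp) _ k.Q2 (fun z hz => k.hQ2 _ _ (by grind))]
  simp [k.hQ1]

lemma bQ2 : (n : ℚ) * (k.Q1 + (n - 1) * k.Q2)
    = #(conjClass n lam) * (lam.parts.count 1 : ℚ) ^ 2 := by
  have h1 : ∑ a, ∑ c, FF (conjClass n lam) a a c a a c = n * (k.Q1 + (n - 1) * k.Q2) := by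
    simp [rowQ k]; ring
  rw [← h1]
  unfold FF
  simp_rw [Finset.sum_comm (t := conjClass n lam)]
  apply cls_sum
  intro π h
  have e : ∀ a c, (if π a = a ∧ π a = a ∧ π c = c then (1 : ℚ) else 0)
    = (if π a = a then 1 else 0) * (if π c = c then 1 else 0) := by
    intro a c
    by_cases h1 : π a = a <;> by_cases h2 : π c = c <;> simp [h1, h2]
  simp_rw [e, ← Finset.mul_sum, ← Finset.sum_mul, cntp h]
  ring

lemma bT : (n : ℚ) * (k.Q1 + (n - 1) * k.T)
    = #(conjClass n lam) * (lam.parts.count 1 + 2 * lam.parts.count 2) := by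
  have h0 : ∀ a, ∑ b, FF (conjClass n lam) a a b b b a = k.Q1 + (n - 1) * k.T := by
    intro a
    rw [sum_splitL [a] (by simp) _ k.T (fun z hz => k.hT _ _ (by grind))]
    simp [k.hQ1]
  have h1 : ∑ a, ∑ b, FF (conjClass n lam) a a b b b a = n * (k.Q1 + (n - 1) * k.T) := by
    simp [h0]; ring
  rw [← h1]
  unfold FF
  simp_rw [Finset.sum_comm (t := conjClass n lam)]
  apply cls_sum
  intro π h
  rw [← cntq h]
  congr 1; ext a
  rw [Finset.sum_eq_single (π a)]
  · simp
  · intro b _ hb; rw [if_neg]; tauto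
  · simp

lemma bJ : (n : ℚ) * (k.Q1 + (n - 1) * k.Q2 + (n - 1) * (2 * k.Q2 + (n - 2) * k.J))
    = #(conjClass n lam) * (lam.parts.count 1 : ℚ) ^ 3 := by
  have h0 : ∀ a b, [b, a].Nodup → ∑ c, FF (conjClass n lam) a b c a b c
      = 2 * k.Q2 + (n - 2) * k.J := by
    intro a b hab
    rw [sum_splitL [a, b] (by grind) _ k.J (fun z hz => k.hJ _ _ _ (by grind))]
    have e1 : FF (conjClass n lam) a b a a b a = k.Q2 := by
      rw [FF_s23, ← k.hQ2 a b (by grind)]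
    have e2 : FF (conjClass n lam) a b b a b b = k.Q2 := by
      rw [FF_d, ← k.hQ2 a b (by grind)]
    simp [e1, e2]; ring
  have h1 : ∀ a, ∑ b, ∑ c, FF (conjClass n lam) a b c a b c
      = k.Q1 + (n - 1) * k.Q2 + (n - 1) * (2 * k.Q2 + (n - 2) * k.J) := by
    intro a
    rw [sum_splitL [a] (by simp) _ _ (fun z hz => h0 a z hz)]
    simp [rowQ k]
  have h2 : ∑ a, ∑ b, ∑ c, FF (conjClass n lam) a b c a b c
      = n * (k.Q1 + (n - 1) * k.Q2 + (n - 1) * (2 * k.Q2 + (n - 2) * k.J)) := by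
    simp [h1]; ring
  rw [← h2]
  unfold FF
  simp_rw [Finset.sum_comm (t := conjClass n lam)]
  apply cls_sum
  intro π h
  simp_rw [if_and3, ← Finset.mul_sum, ← Finset.sum_mul, cntp h]
  ring

lemma bK : (n : ℚ) * (k.Q1 + (n - 1) * k.Q2 + (n - 1) * ((n - 2) * k.K))
    = #(conjClass n lam) *
      ((lam.parts.count 1 + 2 * lam.parts.count 2) * lam.parts.count 1) := by
  have h0 : ∀ a b, [b, a].Nodup → ∑ c, FF (conjClass n lam) a b c b a c
      = (n - 2) * k.K := by
    intro a b hab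
    rw [sum_splitL [a, b] (by grind) _ k.K (fun z hz => k.hK _ _ _ (by grind))]
    have e1 : FF (conjClass n lam) a b a b a a = 0 := by
      rw [FF_s12]; exact FF_z _ _ _ _ _ _ _ (by grind) rfl
    have e2 : FF (conjClass n lam) a b b b a b = 0 := by
      exact FF_z _ _ _ _ _ _ _ (by grind) rfl
    simp [e1, e2]
  have h1 : ∀ a, ∑ b, ∑ c, FF (conjClass n lam) a b c b a c
      = k.Q1 + (n - 1) * k.Q2 + (n - 1) * ((n - 2) * k.K) := by
    intro a
    rw [sum_splitL [a] (by simp) _ _ (fun z hz => h0 a z hz)]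
    simp [rowQ k]
  have h2 : ∑ a, ∑ b, ∑ c, FF (conjClass n lam) a b c b a c
      = n * (k.Q1 + (n - 1) * k.Q2 + (n - 1) * ((n - 2) * k.K)) := by
    simp [h1]; ring
  rw [← h2]
  unfold FF
  simp_rw [Finset.sum_comm (t := conjClass n lam)]
  apply cls_sum
  intro π h
  simp_rw [if_and3, ← Finset.mul_sum, cntp h]
  rw [← cntq h, Finset.sum_mul]
  congr 1; ext a
  rw [Finset.sum_eq_single (π a)]
  · simp
  · intro b _ hb; rw [if_neg (Ne.symm hb)]; simp
  · simp

lemma bL : (n : ℚ) * (k.Q1 + (n - 1) * ((n - 2) * k.L))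
    = #(conjClass n lam) * (lam.parts.count 1 + 3 * lam.parts.count 3) := by
  have h0 : ∀ a b, [b, a].Nodup → ∑ c, FF (conjClass n lam) a b c b c a
      = (n - 2) * k.L := by
    intro a b hab
    rw [sum_splitL [a, b] (by grind) _ k.L (fun z hz => k.hL _ _ _ (by grind))]
    have e1 : FF (conjClass n lam) a b a b a a = 0 := by
      rw [FF_s12]; exact FF_z _ _ _ _ _ _ _ (by grind) rfl
    have e2 : FF (conjClass n lam) a b b b b a = 0 := by
      rw [FF_s23]; exact FF_z _ _ _ _ _ _ _ (by grind) rfl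
    simp [e1, e2]
  have h00 : ∀ a, ∑ c, FF (conjClass n lam) a a c a c a = k.Q1 := by
    intro a
    rw [sum_splitL [a] (by grind) _ 0 (fun z hz => FF_z _ _ _ _ _ _ _ (by grind) rfl)]
    simp [k.hQ1]
  have h1 : ∀ a, ∑ b, ∑ c, FF (conjClass n lam) a b c b c a
      = k.Q1 + (n - 1) * ((n - 2) * k.L) := by
    intro a
    rw [sum_splitL [a] (by simp) _ _ (fun z hz => h0 a z hz)]
    simp [h00]
  have h2 : ∑ a, ∑ b, ∑ c, FF (conjClass n lam) a b c b c a
      = n * (k.Q1 + (n - 1) * ((n - 2) * k.L)) := by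
    simp [h1]; ring
  rw [← h2]
  unfold FF
  simp_rw [Finset.sum_comm (t := conjClass n lam)]
  apply cls_sum
  intro π h
  rw [← cntr h]
  congr 1; ext a
  rw [Finset.sum_eq_single (π a)]
  · rw [Finset.sum_eq_single (π (π a))]
    · simp
    · intro b _ hb; rw [if_neg]; tauto
    · simp
  · intro b _ hb; apply Finset.sum_eq_zero; intro c _; rw [if_neg]; tauto
  · simp
end base

/-- Kronecker delta -/
def dl {n : ℕ} (u v : Fin n) : ℚ := if u = v then 1 else 0

lemma pattern {n : ℕ} {C : Finset (Perm (Fin n))} (k : Cst C) {a b c x y z : Fin n}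
    (hab : a < b) (hbc : b < c) (hxy : x < y) (hyz : y < z) :
    FF C a b c x y z = k.A + (k.B - k.A) * (dl x a + dl y b + dl z c)
      + (k.D - k.A) * (dl x b + dl x c + dl y a + dl y c + dl z a + dl z b)
      + (k.E - 2 * k.B + k.A) * (dl x a * dl y b + dl x a * dl z c + dl y b * dl z c)
      + (k.G - k.B - k.D + k.A) *
        (dl x a * dl y c + dl x a * dl z b + dl x b * dl z c + dl y a * dl z c)
      + (k.I - 2 * k.D + k.A) * (dl x b * dl y c + dl y a * dl z b)
      + (k.J - 3 * k.E + 3 * k.B - k.A) * (dl x a * dl y b * dl z c) := by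
  have hac := hab.trans hbc
  have hxz := hxy.trans hyz
  have n1 := hab.ne
  have n2 := hbc.ne
  have n3 := hac.ne
  have n4 := hxy.ne
  have n5 := hyz.ne
  have n6 := hxz.ne
  have m1 := hab.ne'
  have m2 := hbc.ne'
  have m3 := hac.ne'
  have m4 := hxy.ne'
  have m5 := hyz.ne'
  have m6 := hxz.ne'
  have h3 : ∀ w : Fin n, w = a ∨ w = b ∨ w = c ∨ (w ≠ a ∧ w ≠ b ∧ w ≠ c) := by
    intro w; tauto
  rcases h3 x with rfl | rfl | rfl | ⟨x1, x2, x3⟩ <;>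
  rcases h3 y with rfl | rfl | rfl | ⟨y1, y2, y3⟩ <;>
  rcases h3 z with rfl | rfl | rfl | ⟨z1, z2, z3⟩ <;>
  first
  | (exfalso; order)
  | rw [k.hJ _ _ _ (by grind)]; simp [dl, *]; try ring
  | rw [k.hE _ _ _ _ (by grind)]; simp [dl, *]; try ring
  | rw [FF_s23, k.hE _ _ _ _ (by grind)]; simp [dl, *]; try ring
  | rw [FF_s12, FF_s23, k.hE _ _ _ _ (by grind)]; simp [dl, *]; try ring
  | rw [k.hG _ _ _ _ (by grind)]; simp [dl, *]; try ring
  | rw [FF_s23, k.hG _ _ _ _ (by grind)]; simp [dl, *]; try ring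
  | rw [FF_s23, FF_s12, k.hG _ _ _ _ (by grind)]; simp [dl, *]; try ring
  | rw [FF_s23, FF_s12, FF_s23, k.hG _ _ _ _ (by grind)]; simp [dl, *]; try ring
  | rw [k.hI _ _ _ _ (by grind)]; simp [dl, *]; try ring
  | rw [FF_s12, FF_s23, FF_s12, k.hI _ _ _ _ (by grind)]; simp [dl, *]; try ring
  | rw [k.hB _ _ _ _ _ (by grind)]; simp [dl, *]; try ring
  | rw [FF_s12, k.hB _ _ _ _ _ (by grind)]; simp [dl, *]; try ring
  | rw [FF_s23, FF_s12, k.hB _ _ _ _ _ (by grind)]; simp [dl, *]; try ring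
  | rw [k.hD _ _ _ _ _ (by grind)]; simp [dl, *]; try ring
  | rw [FF_s23, k.hD _ _ _ _ _ (by grind)]; simp [dl, *]; try ring
  | rw [FF_s12, k.hD _ _ _ _ _ (by grind)]; simp [dl, *]; try ring
  | rw [FF_s12, FF_s23, k.hD _ _ _ _ _ (by grind)]; simp [dl, *]; try ring
  | rw [FF_s23, FF_s12, k.hD _ _ _ _ _ (by grind)]; simp [dl, *]; try ring
  | rw [FF_s12, FF_s23, FF_s12, k.hD _ _ _ _ _ (by grind)]; simp [dl, *]; try ring
  | rw [k.hA _ _ _ _ _ _ (by grind)]; simp [dl, *]; try ring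

lemma alg_final (n A B D E G I J L Q1 R1 Q2 T U V W M p q r : ℚ)
    (hA : (n - 1) * (n - 2) * (n - 3) * (n - 4) * ((n - 5) * A - (W - B - 2 * D)) = 0)
    (hB : (n - 1) * (n - 2) * (n - 3) * ((n - 4) * B - (U - E - G)) = 0)
    (hD : (n - 1) * (n - 2) * (n - 3) * ((n - 4) * D - (V - G - I)) = 0)
    (hW : (n - 3) * W = R1 - V - U) (hE : (n - 3) * E = Q2 - J) (hI : (n - 3) * I = V - L)
    (hU : (n - 2) * U = Q1 - Q2) (hV : (n - 2) * V = R1 - T) (hR : (n - 1) * R1 = M - Q1)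
    (bQ1 : n * Q1 = M * p) (bQ2 : n * (Q1 + (n - 1) * Q2) = M * p ^ 2)
    (bT : n * (Q1 + (n - 1) * T) = M * (p + 2 * q))
    (bJ : n * (Q1 + (n - 1) * Q2 + (n - 1) * (2 * Q2 + (n - 2) * J)) = M * p ^ 3)
    (bL : n * (Q1 + (n - 1) * ((n - 2) * L)) = M * (p + 3 * r)) :
    n * ((n - 1) * (n - 2) * (n - 3) * (n - 4) * (n - 5) * A
      + (n - 1) * (n - 2) * (n - 3) * (n - 4) * (4 * B + 5 * D)
      + (n - 1) * (n - 2) * (n - 3) * (8 * E + 6 * G + 4 * I) + (n - 1) * (n - 2) * 6 * J)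
    = M * (n * (n - 1) * (n - 2) + (n ^ 2 + 3 * n - 6) * (p - 1)
      + (n + 2) * ((p - 1) * (p - 2) / 2 + q - 1) + (5 * n - 6) * ((p - 1) * (p - 2) / 2 - q)
      + 3 * ((p - 1) * (p - 2) * (p - 3) / 3 - p - r + 2)) := by
  linear_combination n * hA + 3 * n * hB + 3 * n * hD + n * (n - 1) * (n - 2) * (n - 4) * hW
    + 5 * n * (n - 1) * (n - 2) * hE + n * (n - 1) * (n - 2) * hI
    + n * (n - 1) * (2 * n - 5) * hU + n * (n - 1) * (2 * n - 4) * hV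
    + n * ((n - 2) * (n - 4) + (2 * n - 4)) * hR
    + bJ - bL - (2 * n - 4) * bT + (5 * (n - 2) - (2 * n - 5) - 3) * bQ2
    + (-((n - 2) * (n - 4) + (2 * n - 4) - (2 * n - 5) * (n - 1)) + (2 * n - 4)
      - (5 * (n - 2) - (2 * n - 5) - 3)) * bQ1

lemma sum_pairs (N : ℕ) (c0 c1 c2 c3 c4 : ℚ) :
    ∑ m ∈ range N, ∑ i ∈ range m, (c0 + c1 * (i : ℚ) + c2 * ((m : ℚ) + 1) + c3 * (i : ℚ) ^ 2
      + c4 * ((m : ℚ) + 1) ^ 2)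
    = c0 * (N * (N - 1) / 2) + c1 * (N * (N - 1) * (N - 2) / 6) + c2 * ((N - 1) * N * (N + 1) / 3)
      + c3 * (N * (N - 1) ^ 2 * (N - 2) / 12) + c4 * (N * (N - 1) * (3 * N + 2) * (N + 1) / 12) := by
  have inner : ∀ (m : ℕ) (K : ℚ), ∑ i ∈ range m, (c0 + c1 * (i : ℚ) + c2 * K + c3 * (i : ℚ) ^ 2
      + c4 * K ^ 2) = c0 * m + c1 * (m * (m - 1) / 2) + c2 * K * m
      + c3 * ((m - 1) * m * (2 * m - 1) / 6) + c4 * K ^ 2 * m := by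
    intro m K
    induction m with
    | zero => simp
    | succ m ih => rw [Finset.sum_range_succ, ih]; push_cast; ring
  simp_rw [inner]
  induction N with
  | zero => simp
  | succ m ih => rw [Finset.sum_range_succ, ih]; push_cast; ring

section wts
variable {n : ℕ}

/-- indicator of increasing triples -/
def wt (x y z : Fin n) : ℚ := (if x < y then 1 else 0) * (if y < z then 1 else 0)

lemma s_lt (a : Fin n) : (∑ x : Fin n, if x < a then (1 : ℚ) else 0) = a := by
  rw [Finset.sum_boole]; congr 1
  have : ({x | x < a} : Finset (Fin n)) = Finset.Iio a := by ext; simp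
  rw [this, Fin.card_Iio]

lemma s_gt (a : Fin n) : (∑ x : Fin n, if a < x then (1 : ℚ) else 0) = n - 1 - a := by
  rw [Finset.sum_boole]
  have : ({x | a < x} : Finset (Fin n)) = Finset.Ioi a := by ext; simp
  rw [this, Fin.card_Ioi]
  have e : n = (n - 1 - a : ℕ) + a + 1 := by omega
  have e' : (n : ℚ) = ((n - 1 - a : ℕ) : ℚ) + a + 1 := by exact_mod_cast e
  linarith

lemma s_mid {a b : Fin n} (h : a < b) : (∑ y : Fin n, wt a y b) = b - a - 1 := by
  have : ∀ y, wt a y b = if a < y ∧ y < b then 1 else 0 := by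
    intro y; unfold wt
    by_cases h1 : a < y <;> by_cases h2 : y < b <;> simp [h1, h2]
  simp_rw [this]
  rw [Finset.sum_boole]
  have : ({x | a < x ∧ x < b} : Finset (Fin n)) = Finset.Ioo a b := by ext; simp
  have h' := Fin.lt_def.1 h
  have e : (b : ℕ) = (b - a - 1 : ℕ) + a + 1 := by omega
  rw [this, Fin.card_Ioo]
  have e' : (b : ℚ) = ((b - a - 1 : ℕ) : ℚ) + a + 1 := by exact_mod_cast e
  linarith

lemma w_x (a : Fin n) : ∑ y, ∑ z, wt a y z = ((n : ℚ) - 1 - a) * (n - 2 - a) / 2 := by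
  unfold wt
  simp_rw [← Finset.mul_sum, s_gt]
  have key : ∀ (N : ℚ) (a m : ℕ), a + 1 ≤ m →
      ∑ y ∈ range m, (if a < y then (1 : ℚ) else 0) * (N - 1 - y)
        = (m - 1 - a) * (2 * N - 2 - m - a) / 2 := by
    intro N a m h
    induction m, h using Nat.le_induction with
    | base =>
      rw [Finset.sum_eq_zero]
      · push_cast; ring
      · intro y hy; rw [if_neg (by simp at hy; omega)]; simp
    | succ m hm ih => rw [Finset.sum_range_succ, ih, if_pos (by omega)]; push_cast; ring
  have h2 := Fin.sum_univ_eq_sum_range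
    (fun y : ℕ => (if (a : ℕ) < y then (1 : ℚ) else 0) * ((n : ℚ) - 1 - y)) n
  rw [key n a n a.2] at h2
  simp only [Fin.lt_def]
  rw [h2]; ring

lemma w_y (a : Fin n) : ∑ x, ∑ z, wt x a z = (a : ℚ) * (n - 1 - a) := by
  unfold wt
  simp_rw [← Finset.mul_sum, s_gt, ← Finset.sum_mul, s_lt]

lemma w_z (a : Fin n) : ∑ x, ∑ y, wt x y a = (a : ℚ) * (a - 1) / 2 := by
  unfold wt
  rw [Finset.sum_comm]
  simp_rw [← Finset.sum_mul, s_lt]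
  have key : ∀ (a m : ℕ),
      ∑ y ∈ range m, (y : ℚ) * (if y < a then (1 : ℚ) else 0)
        = if m ≤ a then (m : ℚ) * (m - 1) / 2 else (a : ℚ) * (a - 1) / 2 := by
    intro a m
    induction m with
    | zero => simp
    | succ m ih =>
      rw [Finset.sum_range_succ, ih]
      rcases lt_trichotomy m a with h | h | h
      · rw [if_pos (by omega), if_pos h, if_pos (by omega)]; push_cast; ring
      · subst h; simp
      · rw [if_neg (by omega), if_neg (by omega), if_neg (by omega)]; ring
  have h2 := Fin.sum_univ_eq_sum_range
    (fun y : ℕ => (y : ℚ) * (if y < (a : ℕ) then (1 : ℚ) else 0)) n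
  rw [key a n, if_neg (by omega)] at h2
  simp only [Fin.lt_def]
  rw [h2]

lemma w_0 : ∑ x : Fin n, ∑ y, ∑ z, wt x y z = (n : ℚ) * (n - 1) * (n - 2) / 6 := by
  rw [Finset.sum_comm]
  simp_rw [w_y]
  have key : ∀ (N : ℚ) (m : ℕ),
      ∑ y ∈ range m, (y : ℚ) * (N - 1 - y)
        = (N - 1) * (m * (m - 1) / 2) - ((m - 1) * m * (2 * m - 1) / 6) := by
    intro N m
    induction m with
    | zero => simp
    | succ m ih => rw [Finset.sum_range_succ, ih]; push_cast; ring
  rw [Fin.sum_univ_eq_sum_range (fun y : ℕ => (y : ℚ) * ((n : ℚ) - 1 - y)) n, key]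
  ring

lemma dx (a : Fin n) : ∑ x, ∑ y, ∑ z, wt x y z * dl x a = ((n : ℚ) - 1 - a) * (n - 2 - a) / 2 := by
  rw [← w_x]; simp_rw [← Finset.sum_mul]; simp [dl]
lemma dy (a : Fin n) : ∑ x, ∑ y, ∑ z, wt x y z * dl y a = (a : ℚ) * (n - 1 - a) := by
  rw [← w_y]; simp_rw [← Finset.sum_mul]; simp [dl]
lemma dz (a : Fin n) : ∑ x, ∑ y, ∑ z, wt x y z * dl z a = (a : ℚ) * (a - 1) / 2 := by
  rw [← w_z]; simp [dl]
lemma dxy {a b : Fin n} (h : a < b) :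
    ∑ x, ∑ y, ∑ z, wt x y z * (dl x a * dl y b) = (n : ℚ) - 1 - b := by
  rw [← s_gt]; simp_rw [← Finset.sum_mul, ← mul_assoc]; simp [dl, wt, h]
lemma dxz {a b : Fin n} (h : a < b) :
    ∑ x, ∑ y, ∑ z, wt x y z * (dl x a * dl z b) = (b : ℚ) - a - 1 := by
  rw [← s_mid h]; simp [dl]
lemma dyz {a b : Fin n} (h : a < b) :
    ∑ x, ∑ y, ∑ z, wt x y z * (dl y a * dl z b) = (a : ℚ) := by
  rw [← s_lt]; simp [dl, wt, h]
lemma dxyz {a b c : Fin n} (h : a < b) (h' : b < c) :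
    ∑ x, ∑ y, ∑ z, wt x y z * (dl x a * dl y b * dl z c) = 1 := by
  simp [dl, wt, h, h']
end wts

/-- closed form of the inner sum -/
def PP {n : ℕ} {C : Finset (Perm (Fin n))} (k : Cst C) (a c : ℕ) : ℚ :=
  (k.A * (n * (n - 1) * (n - 2) / 6) + (k.B - k.A) * ((n - 2) * (n + 1) / 2)
        + (k.D - k.A) * (n - 2) ^ 2 + (k.E - 2 * k.B + k.A) * (n - 2)
        + (k.G - k.B - k.D + k.A) * (n - 3) + (k.I - 2 * k.D + k.A) * (n - 1)
        + (k.J - 3 * k.E + 3 * k.B - k.A))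
      + ((k.D - k.B) * (3 / 2) - (k.E - 2 * k.B + k.A) + (k.I - 2 * k.D + k.A)) * (a : ℚ)
      + ((k.D - k.B) / 2 + (k.E - 2 * k.B + k.A) - (k.I - 2 * k.D + k.A)) * (c : ℚ)
      + ((k.D - k.B) / 2) * (a : ℚ) ^ 2 + ((k.B - k.D) / 2) * (c : ℚ) ^ 2

lemma triple_sum {n : ℕ} {C : Finset (Perm (Fin n))} (k : Cst C) {a b c : Fin n}
    (hab : a < b) (hbc : b < c) (h1 : (a : ℕ) + 1 = b) :
    ∑ x, ∑ y, ∑ z, wt x y z * FF C a b c x y z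
    = PP k a c := by
  have hac := hab.trans hbc
  have e : ∀ x y z : Fin n, wt x y z * FF C a b c x y z =
      k.A * wt x y z
      + (k.B - k.A) * (wt x y z * dl x a + wt x y z * dl y b + wt x y z * dl z c)
      + (k.D - k.A) * (wt x y z * dl x b + wt x y z * dl x c + wt x y z * dl y a
        + wt x y z * dl y c + wt x y z * dl z a + wt x y z * dl z b)
      + (k.E - 2 * k.B + k.A) * (wt x y z * (dl x a * dl y b) + wt x y z * (dl x a * dl z c)
        + wt x y z * (dl y b * dl z c))
      + (k.G - k.B - k.D + k.A) * (wt x y z * (dl x a * dl y c) + wt x y z * (dl x a * dl z b)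
        + wt x y z * (dl x b * dl z c) + wt x y z * (dl y a * dl z c))
      + (k.I - 2 * k.D + k.A) * (wt x y z * (dl x b * dl y c) + wt x y z * (dl y a * dl z b))
      + (k.J - 3 * k.E + 3 * k.B - k.A) * (wt x y z * (dl x a * dl y b * dl z c)) := by
    intro x y z
    by_cases h : x < y ∧ y < z
    · rw [pattern k hab hbc h.1 h.2]; ring
    · have : wt x y z = 0 := by
        unfold wt
        by_cases h1 : x < y
        · have : ¬ y < z := fun h2 => h ⟨h1, h2⟩
          simp [this]
        · simp [h1]
      simp [this]
  have hb : (b : ℚ) = a + 1 := by exact_mod_cast h1.symm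
  simp_rw [e, Finset.sum_add_distrib, ← Finset.mul_sum, Finset.sum_add_distrib, w_0, dx, dy, dz,
    dxy hab, dxy hbc, dxy hac, dxz hab, dxz hbc, dxz hac, dyz hab, dyz hbc, dyz hac, dxyz hab hbc,
    hb]
  unfold PP
  ring

lemma pos_sum {n : ℕ} (P : ℕ → ℕ → ℚ) :
    ∑ i : Fin n, ∑ j : Fin n, ∑ k : Fin n, (if (i : ℕ) + 1 = j ∧ j < k then P i k else 0)
    = ∑ m ∈ range (n - 1), ∑ i ∈ range m, P i (m + 1) := by
  have h1 : ∀ i k : Fin n, ∑ j : Fin n, (if (i : ℕ) + 1 = j ∧ j < k then P i k else 0)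
      = if (i : ℕ) + 1 < k then P i k else 0 := by
    intro i k
    by_cases h : (i : ℕ) + 1 < k
    · rw [Finset.sum_eq_single (⟨i + 1, by omega⟩ : Fin n)]
      · simp [h, Fin.lt_def]
      · intro j _ hj; rw [if_neg]; rintro ⟨h1, _⟩; exact hj (by ext; simp [h1])
      · simp
    · rw [if_neg h]; apply Finset.sum_eq_zero; intro j _; rw [if_neg]
      rintro ⟨h1, h2⟩; rw [Fin.lt_def] at h2; omega
  have h2 : ∀ i : Fin n, ∑ j : Fin n, ∑ k : Fin n,
      (if (i : ℕ) + 1 = j ∧ j < k then P i k else 0)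
      = ∑ k : Fin n, if (i : ℕ) + 1 < k then P i k else 0 := by
    intro i; rw [Finset.sum_comm]; simp_rw [h1]
  simp_rw [h2]
  rw [Finset.sum_comm]
  have h3 : ∀ k : Fin n, (∑ i : Fin n, if (i : ℕ) + 1 < k then P i k else 0)
      = ∑ i ∈ range (k - 1 : ℕ), P i k := by
    intro k
    rw [Fin.sum_univ_eq_sum_range (fun i : ℕ => if i + 1 < (k : ℕ) then P i k else 0) n,
      ← Finset.sum_filter]
    congr 1; ext i; simp; omega
  simp_rw [h3]
  rw [Fin.sum_univ_eq_sum_range (fun k : ℕ => ∑ i ∈ range (k - 1), P i k) n]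
  cases n with
  | zero => simp
  | succ n => rw [Finset.sum_range_succ']; simp

lemma occ_sum {n : ℕ} (C : Finset (Perm (Fin n))) :
    (∑ π ∈ C,
      ((((Finset.univ : Finset (Fin n × Fin n × Fin n)).filter fun x =>
          (x.1 : ℕ) + 1 = (x.2.1 : ℕ) ∧ x.2.1 < x.2.2 ∧ π x.1 < π x.2.1 ∧ π x.2.1 < π x.2.2).card : ℚ)))
    = ∑ i : Fin n, ∑ j : Fin n, ∑ k : Fin n, (if (i : ℕ) + 1 = j ∧ j < k then
        ∑ x, ∑ y, ∑ z, wt x y z * FF C i j k x y z else 0) := by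
  have h1 : ∀ i j k, ∑ x, ∑ y, ∑ z, wt x y z * FF C i j k x y z
      = ∑ π ∈ C, wt (π i) (π j) (π k) := by
    intro i j k
    unfold FF
    simp_rw [Finset.mul_sum, Finset.sum_comm (t := C)]
    congr 1; ext π
    rw [Finset.sum_eq_single (π i), Finset.sum_eq_single (π j), Finset.sum_eq_single (π k)]
    · simp
    · intro b _ hb; rw [if_neg (by tauto)]; simp
    · simp
    · intro b _ hb; apply Finset.sum_eq_zero; intro c _; rw [if_neg (by tauto)]; simp
    · simp
    · intro b _ hb; apply Finset.sum_eq_zero; intro c _; apply Finset.sum_eq_zero; intro d _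
      rw [if_neg (by tauto)]; simp
    · simp
  have h2 : ∀ i j k : Fin n, (if (i : ℕ) + 1 = j ∧ j < k then
        ∑ x, ∑ y, ∑ z, wt x y z * FF C i j k x y z else 0)
      = ∑ π ∈ C, if (i : ℕ) + 1 = j ∧ j < k then wt (π i) (π j) (π k) else 0 := by
    intro i j k; rw [h1]; split_ifs <;> simp
  simp_rw [h2, Finset.sum_comm (t := C)]
  congr 1; ext π
  rw [Finset.card_filter]
  push_cast
  rw [Fintype.sum_prod_type]
  simp_rw [Fintype.sum_prod_type]
  congr 1; ext i; congr 1; ext j; congr 1; ext k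
  by_cases a1 : (i : ℕ) + 1 = j <;> by_cases a2 : j < k <;> by_cases a3 : π i < π j <;>
    by_cases a4 : π j < π k <;> simp [wt, a1, a2, a3, a4]

theorem stmt15 (n : ℕ) (hn : 3 ≤ n) (lam : n.Partition)
    (p q r X₁ X₂ X₃ X₄ : ℚ)
    (hp : p = (lam.parts.count 1 : ℚ)) (hq : q = (lam.parts.count 2 : ℚ))
    (hr : r = (lam.parts.count 3 : ℚ))
    (hX1 : X₁ = p - 1) (hX2 : X₂ = (p - 1) * (p - 2) / 2 + q - 1)
    (hX3 : X₃ = (p - 1) * (p - 2) / 2 - q)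
    (hX4 : X₄ = (p - 1) * (p - 2) * (p - 3) / 3 - p - r + 2) :
    (∑ π ∈ conjClass n lam,
      ((((Finset.univ : Finset (Fin n × Fin n × Fin n)).filter fun x =>
          (x.1 : ℕ) + 1 = (x.2.1 : ℕ) ∧ x.2.1 < x.2.2 ∧ π x.1 < π x.2.1 ∧ π x.2.1 < π x.2.2).card : ℚ)))
    = ((conjClass n lam).card : ℚ) *
      (((n - 1).choose 2 : ℚ) / 6 + ((n : ℚ) ^ 2 + 3 * (n : ℚ) - 6) * X₁ / (12 * (n : ℚ))
        + ((n : ℚ) + 2) * X₂ / (12 * (n : ℚ)) + (5 * (n : ℚ) - 6) * X₃ / (12 * (n : ℚ))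
        + X₄ / (4 * (n : ℚ))) := by
  obtain ⟨k⟩ := exCst lam
  have hA : ((n : ℚ) - 1) * (n - 2) * (n - 3) * (n - 4)
      * ((n - 5) * k.A - (k.W - k.B - 2 * k.D)) = 0 := by
    rcases (by omega : n = 3 ∨ n = 4 ∨ 5 ≤ n) with h | h | h
    · have : (n : ℚ) = 3 := by exact_mod_cast h
      rw [this]; ring
    · have : (n : ℚ) = 4 := by exact_mod_cast h
      rw [this]; ring
    · rw [mA k h]; ring
  have hB : ((n : ℚ) - 1) * (n - 2) * (n - 3)
      * ((n - 4) * k.B - (k.U - k.E - k.G)) = 0 := by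
    rcases (by omega : n = 3 ∨ 4 ≤ n) with h | h
    · have : (n : ℚ) = 3 := by exact_mod_cast h
      rw [this]; ring
    · rw [mB k h]; ring
  have hD : ((n : ℚ) - 1) * (n - 2) * (n - 3)
      * ((n - 4) * k.D - (k.V - k.G - k.I)) = 0 := by
    rcases (by omega : n = 3 ∨ 4 ≤ n) with h | h
    · have : (n : ℚ) = 3 := by exact_mod_cast h
      rw [this]; ring
    · rw [mD k h]; ring
  have fin := alg_final n _ _ _ _ _ _ _ _ _ _ _ _ _ _ _ _ _ _ _ hA hB hD (mW k hn) (mE k hn)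
    (mI k hn) (mU k hn) (mV k hn) (mR k hn) (bQ1 k) (bQ2 k) (bT k) (bJ k) (bL k)
  rw [← hp, ← hq, ← hr, ← hX2, ← hX3, ← hX4, ← hX1] at fin
  rw [occ_sum]
  have h1 : ∀ i j l : Fin n, (if (i : ℕ) + 1 = j ∧ j < l then
        ∑ x, ∑ y, ∑ z, wt x y z * FF (conjClass n lam) i j l x y z else 0) =
      if (i : ℕ) + 1 = j ∧ j < l then PP k i l else 0 := by
    intro i j l
    refine if_ctx_congr Iff.rfl (fun h => ?_) (fun _ => rfl)
    exact triple_sum k (Fin.lt_def.2 (by omega)) h.2 h.1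
  simp_rw [h1]
  rw [pos_sum (PP k)]
  unfold PP
  simp only [Nat.cast_add, Nat.cast_one]
  rw [sum_pairs, Nat.cast_choose_two, Nat.cast_sub (by omega), Nat.cast_one]
  have hn0 : (n : ℚ) ≠ 0 := by
    have : n ≠ 0 := by omega
    exact_mod_cast this
  have rhs : ((conjClass n lam).card : ℚ) *
      (((n : ℚ) - 1) * ((n : ℚ) - 1 - 1) / 2 / 6
        + ((n : ℚ) ^ 2 + 3 * (n : ℚ) - 6) * X₁ / (12 * (n : ℚ))
        + ((n : ℚ) + 2) * X₂ / (12 * (n : ℚ)) + (5 * (n : ℚ) - 6) * X₃ / (12 * (n : ℚ))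
        + X₄ / (4 * (n : ℚ)))
      = (#(conjClass n lam) * (n * (n - 1) * (n - 2) + (n ^ 2 + 3 * n - 6) * X₁
      + (n + 2) * X₂ + (5 * n - 6) * X₃ + 3 * X₄)) / (12 * n) := by
    field_simp
    ring
  rw [rhs, ← fin, eq_div_iff (by positivity)]
  ring
end

section
/- Let n ≥ 3 and let λ be a partition of n. Then Σ_{π ∈ C_λ} occ₍[₂₁₋₃)₎(π) = |C_λ| · ( (n−2)/6 + (n−3)(n−4)·X₁/(6n(n−1)) + X₂/(3n) − (n−2)·X₃/(n(n−1)) ), where occ₍[₂₁₋₃)₎(π) = #{k : 2 < k ≤ n, π(2) < π(1) < π(k)} is the number of occurrences of the vincular pattern [21-3) in π (occurrences π(1)π(2)π(k) of the classical pattern 213 whose first two letters are the first two letters of π). -/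
open Equiv Finset

lemma aux_conj_mem {n : ℕ} (lam : n.Partition) (σ π : Equiv.Perm (Fin n)) :
    σ * π * σ⁻¹ ∈ conjClass n lam ↔ π ∈ conjClass n lam := by
  simp only [conjClass, Finset.mem_filter, Finset.mem_univ, true_and]
  simp only [Equiv.Perm.parts_partition, Equiv.Perm.cycleType_conj, Equiv.Perm.card_support_conj]

lemma aux_inv {n : ℕ} (lam : n.Partition) (σ : Equiv.Perm (Fin n)) (g : Equiv.Perm (Fin n) → ℚ) :
    ∑ π ∈ conjClass n lam, g (σ⁻¹ * π * σ) = ∑ π ∈ conjClass n lam, g π := by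
  apply Finset.sum_bij' (fun π _ => σ⁻¹ * π * σ) (fun π _ => σ * π * σ⁻¹)
  · intro π h
    have := aux_conj_mem lam σ⁻¹ π
    rw [inv_inv] at this
    exact this.2 h
  · intro π h
    exact (aux_conj_mem lam σ π).2 h
  · intro π h; group
  · intro π h; group
  · intro π h; rfl

/-- number of π in the class with π x = a, π y = b -/
def auxN {n : ℕ} (lam : n.Partition) (x y a b : Fin n) : ℚ :=
  ∑ π ∈ conjClass n lam, (if π x = a ∧ π y = b then 1 else 0)

lemma auxN_inv {n : ℕ} (lam : n.Partition) (σ : Equiv.Perm (Fin n)) (x y a b : Fin n) :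
    auxN lam (σ x) (σ y) (σ a) (σ b) = auxN lam x y a b := by
  unfold auxN
  rw [← aux_inv lam σ (fun π => if π x = a ∧ π y = b then (1:ℚ) else 0)]
  refine Finset.sum_congr rfl fun π _ => ?_
  simp [Equiv.Perm.mul_apply, Equiv.symm_apply_eq]

lemma aux_trans {n k : ℕ} (f g : Fin k → Fin n) (hf : Function.Injective f)
    (hg : Function.Injective g) : ∃ σ : Equiv.Perm (Fin n), ∀ i, σ (f i) = g i := by
  have := Equiv.Perm.isMultiplyPretransitive (Fin n) k
  obtain ⟨σ, h⟩ := MulAction.exists_smul_eq (Equiv.Perm (Fin n))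
    (⟨f, hf⟩ : Fin k ↪ Fin n) ⟨g, hg⟩
  refine ⟨σ, fun i => ?_⟩
  have := DFunLike.congr_fun h i
  simpa using this

lemma aux_count1 {n : ℕ} (lam : n.Partition) (π : Equiv.Perm (Fin n)) (h : π ∈ conjClass n lam) :
    ∑ x, (if π x = x then (1:ℚ) else 0) = lam.parts.count 1 := by
  simp only [conjClass, Finset.mem_filter, Finset.mem_univ, true_and] at h
  rw [← h, Equiv.Perm.parts_partition, Multiset.count_add]
  have h1 : π.cycleType.count 1 = 0 := by
    rw [Multiset.count_eq_zero]
    intro hh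
    have := Equiv.Perm.two_le_of_mem_cycleType hh
    omega
  rw [h1, Multiset.count_replicate_self, zero_add, Finset.sum_boole]
  congr 1
  rw [← Finset.card_compl]
  congr 1
  ext x
  simp

lemma aux_count2 {n : ℕ} (lam : n.Partition) (π : Equiv.Perm (Fin n)) (h : π ∈ conjClass n lam) :
    ∑ x, (if π x ≠ x ∧ π (π x) = x then (1:ℚ) else 0) = 2 * lam.parts.count 2 := by
  simp only [conjClass, Finset.mem_filter, Finset.mem_univ, true_and] at h
  rw [← h, Equiv.Perm.parts_partition, Multiset.count_add]
  have h1 : (Multiset.replicate (Fintype.card (Fin n) - π.support.card) 1).count 2 = 0 := by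
    rw [Multiset.count_replicate]; simp
  rw [h1, add_zero, Finset.sum_boole]
  rw [Equiv.Perm.cycleType_def, Multiset.count_map]
  norm_cast
  change _ = 2 * (π.cycleFactorsFinset.filter (fun c => 2 = c.support.card)).card
  have key : ∀ x, π x ≠ x → (π (π x) = x ↔ (π.cycleOf x).support.card = 2) := by
    intro x hx
    have hc := Equiv.Perm.isCycle_cycleOf π hx
    have hx' : π.cycleOf x x ≠ x := by simpa using hx
    have := hc.pow_eq_one_iff' (n := 2) hx'
    have h2 : (π.cycleOf x ^ 2) x = π (π x) := by
      rw [Equiv.Perm.cycleOf_pow_apply_self, pow_two, Equiv.Perm.mul_apply]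
    rw [h2] at this
    rw [← this, ← hc.orderOf]
    constructor
    · intro hh
      exact orderOf_eq_prime hh (by rw [ne_eq, Equiv.Perm.cycleOf_eq_one_iff]; exact hx)
    · intro hh
      rw [← hh]; exact pow_orderOf_eq_one _
  rw [Finset.card_eq_sum_card_fiberwise (f := fun x => π.cycleOf x)
    (t := π.cycleFactorsFinset.filter (fun c => 2 = c.support.card))]
  · rw [Finset.sum_congr rfl (g := fun _ => 2), Finset.sum_const, smul_eq_mul, mul_comm]
    intro c hc
    rw [Finset.mem_filter] at hc
    rw [hc.2]
    congr 1
    ext x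
    simp only [Finset.mem_filter, Finset.mem_univ, true_and]
    constructor
    · rintro ⟨⟨h1, h2⟩, rfl⟩
      simpa using h1
    · intro hx
      have e := Equiv.Perm.cycle_is_cycleOf hx hc.1
      have h3 : π x ≠ x := by
        have := Equiv.Perm.mem_cycleFactorsFinset_support_le hc.1 hx
        simpa using this
      exact ⟨⟨h3, (key x h3).2 (by rw [← e]; exact hc.2.symm)⟩, e.symm⟩
  · intro x hx
    simp only [Finset.coe_filter, Finset.mem_univ, true_and, Set.mem_ofPred_eq] at hx ⊢
    refine ⟨?_, ((key x hx.1).1 hx.2).symm⟩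
    rw [Equiv.Perm.cycleOf_mem_cycleFactorsFinset_iff]
    simpa using hx.1

/-- averaging over ordered pairs -/
lemma aux_pair {n : ℕ} (lam : n.Partition) (g : Equiv.Perm (Fin n) → Fin n → Fin n → ℚ)
    (hg : ∀ σ π x y, g (σ⁻¹ * π * σ) x y = g π (σ x) (σ y)) (x0 y0 : Fin n) (h0 : x0 ≠ y0)
    (c : ℚ)
    (hc : ∀ π ∈ conjClass n lam, ∑ x, ∑ y, (if x ≠ y then g π x y else 0) = c) :
    (n : ℚ) * (n - 1) * ∑ π ∈ conjClass n lam, g π x0 y0 = (conjClass n lam).card * c := by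
  have hc' : ((conjClass n lam).card : ℚ) * c
      = ∑ π ∈ conjClass n lam, ∑ x, ∑ y, (if x ≠ y then g π x y else 0) := by
    rw [Finset.sum_congr rfl hc, Finset.sum_const, nsmul_eq_mul]
  rw [hc', Finset.sum_comm]
  have hh : ∀ x y, x ≠ y → ∑ π ∈ conjClass n lam, g π x y = ∑ π ∈ conjClass n lam, g π x0 y0 := by
    intro x y hxy
    obtain ⟨σ, hσ⟩ := aux_trans ![x0, y0] ![x, y]
      (by intro i j; fin_cases i <;> fin_cases j <;> simp [h0, h0.symm])
      (by intro i j; fin_cases i <;> fin_cases j <;> simp [hxy, hxy.symm])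
    have e0 := hσ 0
    have e1 := hσ 1
    simp at e0 e1
    rw [← aux_inv lam σ (fun π => g π x0 y0)]
    simp only [hg, e0, e1]
  have : ∀ x, ∑ π ∈ conjClass n lam, ∑ y, (if x ≠ y then g π x y else 0)
      = (n - 1) * ∑ π ∈ conjClass n lam, g π x0 y0 := by
    intro x
    rw [Finset.sum_comm]
    have : ∀ y, ∑ π ∈ conjClass n lam, (if x ≠ y then g π x y else 0)
       = (1 - if x = y then 1 else 0) * ∑ π ∈ conjClass n lam, g π x0 y0 := by
      intro y
      by_cases h : x = y
      · simp [h]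
      · simp [h, hh x y h]
    simp only [this, ← Finset.sum_mul]
    simp
  simp only [this]
  simp
  ring

lemma aux_sum1 (m : ℕ) : ∑ a : Fin m, ((m:ℚ) - 1 - (a:ℕ)) = m * (m - 1) / 2 := by
  rw [Fin.sum_univ_eq_sum_range (fun a => (m:ℚ) - 1 - (a:ℕ))]
  have : ∀ k : ℕ, ∑ a ∈ Finset.range k, ((m:ℚ) - 1 - (a:ℕ)) = k * (m - 1) - k * (k - 1) / 2 := by
    intro k
    induction k with
    | zero => simp
    | succ k ih => rw [Finset.sum_range_succ, ih]; push_cast; ring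
  rw [this]; ring

lemma aux_sum2 (m : ℕ) : ∑ a : Fin m, ∑ b : Fin m, (if b < a then ((m:ℚ) - 1 - (a:ℕ)) else 0)
    = m * (m - 1) * (m - 2) / 6 := by
  have : ∀ a : Fin m, ∑ b : Fin m, (if b < a then ((m:ℚ) - 1 - (a:ℕ)) else 0)
      = (a:ℕ) * ((m:ℚ) - 1 - (a:ℕ)) := by
    intro a
    rw [← Finset.sum_filter, Finset.sum_const, nsmul_eq_mul]
    congr 2
    rw [← Fin.card_Iio]
    congr 1
    ext; simp
  simp only [this]
  rw [Fin.sum_univ_eq_sum_range (fun a => (a:ℚ) * ((m:ℚ) - 1 - (a:ℕ)))]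
  have : ∀ k : ℕ, ∑ a ∈ Finset.range k, ((a:ℚ) * ((m:ℚ) - 1 - (a:ℕ)))
      = k * (k - 1) / 2 * (m - 1) - (k - 1) * k * (2 * k - 1) / 6 := by
    intro k
    induction k with
    | zero => simp
    | succ k ih => rw [Finset.sum_range_succ, ih]; push_cast; ring
  rw [this]; ring

lemma aux_f (m : ℕ) (π : Equiv.Perm (Fin (m+2))) :
    (((Finset.univ : Finset (Fin (m+2))).filter fun k : Fin (m+2) =>
          1 < (k : ℕ) ∧ π 1 < π 0 ∧ π 0 < π k).card : ℚ)
    = ∑ a : Fin (m+2), ∑ b : Fin (m+2), (if b < a then ((m:ℚ) + 1 - (a:ℕ)) else 0) *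
        (if π 0 = a ∧ π 1 = b then 1 else 0) := by
  have : ∀ a b : Fin (m+2), (if b < a then ((m:ℚ) + 1 - (a:ℕ)) else 0) *
        (if π 0 = a ∧ π 1 = b then 1 else 0) = if π 0 = a then (if π 1 = b then
          (if b < a then ((m:ℚ) + 1 - (a:ℕ)) else 0) else 0) else 0 := by
    intro a b
    by_cases h1 : π 0 = a <;> by_cases h2 : π 1 = b <;> simp [h1, h2]
  simp only [this]
  have : ∀ a : Fin (m+2), ∑ b : Fin (m+2), (if π 0 = a then (if π 1 = b then
          (if b < a then ((m:ℚ) + 1 - (a:ℕ)) else 0) else 0) else 0)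
      = if π 0 = a then (if π 1 < a then ((m:ℚ) + 1 - (a:ℕ)) else 0) else 0 := by
    intro a
    by_cases h1 : π 0 = a <;> simp [h1]
  simp only [this]
  rw [Finset.sum_ite_eq]
  simp only [Finset.mem_univ, if_true]
  by_cases h : π 1 < π 0
  · rw [if_pos h]
    have e : ((Finset.univ : Finset (Fin (m+2))).filter fun k : Fin (m+2) =>
          1 < (k : ℕ) ∧ π 1 < π 0 ∧ π 0 < π k) = (Finset.Ioi (π 0)).map π.symm.toEmbedding := by
      ext k
      simp only [Finset.mem_filter, Finset.mem_univ, true_and, Finset.mem_map_equiv,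
        Equiv.symm_symm, Finset.mem_Ioi]
      constructor
      · exact fun h => h.2.2
      · intro hk
        refine ⟨?_, h, hk⟩
        by_contra hlt
        have : k = 0 ∨ k = 1 := by
          simp only [Fin.ext_iff, Fin.val_zero, Fin.val_one]; omega
        rcases this with rfl | rfl
        · exact lt_irrefl _ hk
        · exact lt_asymm h hk
    rw [e, Finset.card_map, Fin.card_Ioi]
    have := (π 0).isLt
    rw [Nat.cast_sub (by omega)]
    push_cast [Nat.cast_sub]
    ring
  · simp [h]

lemma aux_N_const {n : ℕ} (lam : n.Partition) {k : ℕ} (f g : Fin k → Fin n)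
    (hf : Function.Injective f) (hg : Function.Injective g) (i j s t : Fin k) :
    auxN lam (f i) (f j) (f s) (f t) = auxN lam (g i) (g j) (g s) (g t) := by
  obtain ⟨σ, h⟩ := aux_trans f g hf hg
  rw [← h, ← h, ← h, ← h, auxN_inv]

/-- S in terms of constants -/
lemma aux_S (m : ℕ) (lam : (m+2).Partition) :
    ∑ a : Fin (m+2), ∑ b : Fin (m+2), (if b < a then ((m:ℚ) + 1 - (a:ℕ)) else 0) *
        auxN lam 0 1 a b
    = m * auxN lam 0 1 1 0 + ((m:ℚ) - 1) / 2 * (∑ a : Fin m, auxN lam 0 1 a.succ.succ 0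
        + ∑ a : Fin m, auxN lam 0 1 a.succ.succ 1)
      + ((m:ℚ) - 2) / 6 * (∑ a : Fin m, ∑ b : Fin m, auxN lam 0 1 a.succ.succ b.succ.succ) := by
  have d01 : (0 : Fin (m+2)) ≠ 1 := by simp
  have s0 : ∀ a : Fin m, a.succ.succ ≠ 0 := fun a => Fin.succ_ne_zero _
  have s1 : ∀ a : Fin m, a.succ.succ ≠ 1 := fun a => by
    rw [← Fin.succ_zero_eq_one, Ne, Fin.succ_inj]; exact Fin.succ_ne_zero _
  have inj3 : ∀ a : Fin m, Function.Injective (![0, 1, a.succ.succ] : Fin 3 → Fin (m+2)) := by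
    intro a i j
    fin_cases i <;> fin_cases j <;> simp [d01, d01.symm, s0, s1, (s0 a).symm, (s1 a).symm]
  have inj4 : ∀ a b : Fin m, a ≠ b →
      Function.Injective (![0, 1, a.succ.succ, b.succ.succ] : Fin 4 → Fin (m+2)) := by
    intro a b hab i j
    fin_cases i <;> fin_cases j <;>
      simp [d01, d01.symm, s0, s1, (s0 a).symm, (s1 a).symm, (s0 b).symm, (s1 b).symm, hab,
        hab.symm]
  obtain ⟨P, hP⟩ : ∃ P, ∀ a : Fin m, auxN lam 0 1 a.succ.succ 0 = P := by
    rcases isEmpty_or_nonempty (Fin m) with he | ⟨⟨a0⟩⟩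
    · exact ⟨0, fun a => he.elim a⟩
    · exact ⟨_, fun a => aux_N_const lam _ _ (inj3 a) (inj3 a0) 0 1 2 0⟩
  obtain ⟨F, hF⟩ : ∃ P, ∀ a : Fin m, auxN lam 0 1 a.succ.succ 1 = P := by
    rcases isEmpty_or_nonempty (Fin m) with he | ⟨⟨a0⟩⟩
    · exact ⟨0, fun a => he.elim a⟩
    · exact ⟨_, fun a => aux_N_const lam _ _ (inj3 a) (inj3 a0) 0 1 2 1⟩
  obtain ⟨D, hD⟩ : ∃ P, ∀ a b : Fin m, a ≠ b → auxN lam 0 1 a.succ.succ b.succ.succ = P := by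
    by_cases he : ∃ a b : Fin m, a ≠ b
    · obtain ⟨a0, b0, h0⟩ := he
      exact ⟨_, fun a b h => aux_N_const lam _ _ (inj4 a b h) (inj4 a0 b0 h0) 0 1 2 3⟩
    · exact ⟨0, fun a b h => (he ⟨a, b, h⟩).elim⟩
  have hE : ∀ a : Fin m, auxN lam 0 1 a.succ.succ a.succ.succ = 0 := by
    intro a
    unfold auxN
    refine Finset.sum_eq_zero fun π _ => if_neg ?_
    rintro ⟨h1, h2⟩
    exact d01 (π.injective (h1.trans h2.symm))
  have hD2 : ∀ a b : Fin m, auxN lam 0 1 a.succ.succ b.succ.succ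
      = D * (1 - if a = b then 1 else 0) := by
    intro a b
    by_cases h : a = b
    · subst h; simp [hE]
    · simp [h, hD a b h]
  have hD3 : ∀ a b : Fin m, (if b < a then ((m:ℚ) - 1 - (a:ℕ)) else 0) *
      (D * (1 - if a = b then 1 else 0)) = D * (if b < a then ((m:ℚ) - 1 - (a:ℕ)) else 0) := by
    intro a b
    by_cases h : b < a
    · simp [h, h.ne', mul_comm]
    · simp [h]
  have hD4 : ∑ a : Fin m, ∑ b : Fin m, D * (1 - if a = b then (1:ℚ) else 0) = D * (m * (m - 1)) := by
    simp [← Finset.mul_sum, Finset.sum_sub_distrib]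
    ring
  have hs1 : ∀ a : Fin m, (m:ℚ) + 1 - ((a:ℕ) + 1 + 1) = m - 1 - (a:ℕ) := fun a => by ring
  have l1 : ∀ a : Fin m, (1 : Fin (m+2)) < a.succ.succ := fun a => by
    rw [← Fin.succ_zero_eq_one, Fin.succ_lt_succ_iff]; exact Fin.succ_pos _
  simp only [hP, hF, hD2, hD4]
  simp only [Fin.sum_univ_succ (n := m+1), Fin.sum_univ_succ (n := m), Fin.succ_zero_eq_one,
    hP, hF, hD2, Fin.succ_lt_succ_iff, Fin.val_succ, Nat.cast_add, Nat.cast_one, l1, hs1, hD3,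
    Fin.succ_pos, if_true, Fin.not_lt_zero, if_false, zero_mul, Finset.sum_const_zero,
    lt_irrefl, Finset.sum_add_distrib, ← Finset.mul_sum, ← Finset.sum_mul, aux_sum1, aux_sum2,
    Finset.sum_const, Fin.val_zero, Nat.cast_zero,
    Finset.card_univ, Fintype.card_fin, nsmul_eq_mul]
  ring

lemma aux_ne_sum {n : ℕ} (f : Fin n → Fin n → ℚ) :
    ∑ x, ∑ y, (if x ≠ y then f x y else 0) = ∑ x, ∑ y, f x y - ∑ x, f x x := by
  rw [← Finset.sum_sub_distrib]
  refine Finset.sum_congr rfl fun x _ => ?_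
  have : ∀ y, (if x ≠ y then f x y else 0) = f x y - if x = y then f x y else 0 := by
    intro y
    by_cases h : x = y <;> simp [h]
  simp only [this, Finset.sum_sub_distrib]
  simp

lemma aux_main (m : ℕ) (lam : (m+2).Partition) (p q : ℚ)
    (hp : p = (lam.parts.count 1 : ℚ)) (hq : q = (lam.parts.count 2 : ℚ)) :
    ((m:ℚ) + 2) * (m + 1) * (∑ a : Fin (m+2), ∑ b : Fin (m+2),
      (if b < a then ((m:ℚ) + 1 - (a:ℕ)) else 0) * auxN lam 0 1 a b)
    = (conjClass (m+2) lam).card * (m * (2 * q) + ((m:ℚ) - 1) / 2 *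
        ((m + 2 - p) - 2 * q + ((m + 1) * p - (p ^ 2 - p)))
      + ((m:ℚ) - 2) / 6 * ((m + 2) * (m + 1) - 2 * ((m + 1) * p) - 2 * (m + 2 - p)
        + (p ^ 2 - p) + 2 * q)) := by
  have d01 : (0 : Fin (m+2)) ≠ 1 := by simp
  rw [aux_S]
  have N0 : ∀ a, auxN lam 0 1 a a = 0 := by
    intro a
    unfold auxN
    refine Finset.sum_eq_zero fun π _ => if_neg ?_
    rintro ⟨h1, h2⟩
    exact d01 (π.injective (h1.trans h2.symm))
  have Sa : ∀ b, ∑ a, auxN lam 0 1 a b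
      = ∑ π ∈ conjClass (m+2) lam, (if π 1 = b then (1:ℚ) else 0) := by
    intro b
    unfold auxN
    rw [Finset.sum_comm]
    refine Finset.sum_congr rfl fun π _ => ?_
    by_cases h : π 1 = b <;> simp [h]
  have Sb : ∀ a, ∑ b, auxN lam 0 1 a b
      = ∑ π ∈ conjClass (m+2) lam, (if π 0 = a then (1:ℚ) else 0) := by
    intro a
    unfold auxN
    rw [Finset.sum_comm]
    refine Finset.sum_congr rfl fun π _ => ?_
    by_cases h : π 0 = a <;> simp [h]
  have Sab : ∑ a, ∑ b, auxN lam 0 1 a b = (conjClass (m+2) lam).card := by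
    simp only [Sb]
    rw [Finset.sum_comm]
    simp
  have c1 := aux_count1 lam
  have c2 := aux_count2 lam
  rw [← hp] at c1
  rw [← hq] at c2
  have V1 := aux_pair lam (fun π x y => if π y = x then 1 else 0)
    (by intro σ π x y; simp [Equiv.Perm.mul_apply, Equiv.symm_apply_eq]) 0 1 d01 (m + 2 - p)
    (by intro π hπ
        rw [aux_ne_sum, c1 π hπ, Finset.sum_comm]
        simp)
  have U1 := aux_pair lam (fun π x y => if π y = y then 1 else 0)
    (by intro σ π x y; simp [Equiv.Perm.mul_apply, Equiv.symm_apply_eq]) 0 1 d01 ((m + 1) * p)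
    (by intro π hπ
        rw [aux_ne_sum]
        simp only [c1 π hπ]
        simp
        ring)
  have V0 := aux_pair lam (fun π x y => if π x = y then 1 else 0)
    (by intro σ π x y; simp [Equiv.Perm.mul_apply, Equiv.symm_apply_eq]) 0 1 d01 (m + 2 - p)
    (by intro π hπ
        rw [aux_ne_sum, c1 π hπ]
        simp)
  have U0 := aux_pair lam (fun π x y => if π x = x then 1 else 0)
    (by intro σ π x y; simp [Equiv.Perm.mul_apply, Equiv.symm_apply_eq]) 0 1 d01 ((m + 1) * p)
    (by intro π hπ
        rw [aux_ne_sum, c1 π hπ, Finset.sum_comm]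
        simp only [c1 π hπ]
        simp
        ring)
  have W := aux_pair lam (fun π x y => if π x = x ∧ π y = y then 1 else 0)
    (by intro σ π x y; simp [Equiv.Perm.mul_apply, Equiv.symm_apply_eq]) 0 1 d01 (p ^ 2 - p)
    (by intro π hπ
        rw [aux_ne_sum]
        simp only [and_self, c1 π hπ]
        have : ∀ x y, (if π x = x ∧ π y = y then (1:ℚ) else 0)
            = (if π x = x then 1 else 0) * (if π y = y then 1 else 0) := by
          intro x y
          by_cases h : π x = x <;> by_cases h' : π y = y <;> simp [h, h']
        simp only [this, ← Finset.mul_sum, ← Finset.sum_mul, c1 π hπ]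
        ring)
  have T := aux_pair lam (fun π x y => if π x = y ∧ π y = x then 1 else 0)
    (by intro σ π x y; simp [Equiv.Perm.mul_apply, Equiv.symm_apply_eq]) 0 1 d01 (2 * q)
    (by intro π hπ
        rw [← c2 π hπ]
        refine Finset.sum_congr rfl fun x _ => ?_
        have : ∀ y, (if x ≠ y then (if π x = y ∧ π y = x then (1:ℚ) else 0) else 0)
            = if π x = y then (if π x ≠ x ∧ π (π x) = x then 1 else 0) else 0 := by
          intro y
          by_cases h : π x = y
          · subst h
            by_cases h' : x = π x
            · simp [← h']
            · have h'' : π x ≠ x := fun h => h' h.symm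
              simp [h', h'']
          · simp [h]
        simp only [this]
        simp)
  change _ * auxN lam 0 1 0 1 = _ at W
  change _ * auxN lam 0 1 1 0 = _ at T
  rw [← Sa] at V1 U1
  rw [← Sb] at V0 U0
  have Sab' := Sab
  simp only [Fin.sum_univ_succ (n := m+1), Fin.sum_univ_succ (n := m), Fin.succ_zero_eq_one, N0,
    Finset.sum_add_distrib] at V1 U1 V0 U0 Sab'
  push_cast at V1 U1 V0 U0 W T
  generalize ((conjClass (m+2) lam).card : ℚ) = C at *
  generalize auxN lam 0 1 0 1 = w at *
  generalize auxN lam 0 1 1 0 = t at *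
  generalize ∑ a : Fin m, auxN lam 0 1 a.succ.succ 0 = MP at *
  generalize ∑ a : Fin m, auxN lam 0 1 a.succ.succ 1 = MF at *
  generalize ∑ a : Fin m, ∑ b : Fin m, auxN lam 0 1 a.succ.succ b.succ.succ = MD at *
  generalize ∑ a : Fin m, auxN lam 0 1 0 a.succ.succ = A at *
  generalize ∑ a : Fin m, auxN lam 0 1 1 a.succ.succ = B at *
  linear_combination ((m:ℚ) * T + ((m:ℚ) - 1) / 2 * (V1 - T + U1 - W)
    + ((m:ℚ) - 2) / 6 * (((m:ℚ) + 2) * (m + 1) * Sab' - U0 - V0 - U1 - V1 + W + T))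

theorem stmt17 (n : ℕ) (hn : 3 ≤ n) (lam : n.Partition)
    (p q r X₁ X₂ X₃ X₄ : ℚ)
    (hp : p = (lam.parts.count 1 : ℚ)) (hq : q = (lam.parts.count 2 : ℚ))
    (hr : r = (lam.parts.count 3 : ℚ))
    (hX1 : X₁ = p - 1) (hX2 : X₂ = (p - 1) * (p - 2) / 2 + q - 1)
    (hX3 : X₃ = (p - 1) * (p - 2) / 2 - q)
    (hX4 : X₄ = (p - 1) * (p - 2) * (p - 3) / 3 - p - r + 2) :
    (∑ π ∈ conjClass n lam,
      ((((Finset.univ : Finset (Fin n)).filter fun k : Fin n =>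
          1 < (k : ℕ) ∧ π ⟨1, by omega⟩ < π ⟨0, by omega⟩ ∧
          π ⟨0, by omega⟩ < π k).card : ℚ)))
    = ((conjClass n lam).card : ℚ) *
      (((n : ℚ) - 2) / 6
        + ((n : ℚ) - 3) * ((n : ℚ) - 4) * X₁ / (6 * (n : ℚ) * ((n : ℚ) - 1))
        + X₂ / (3 * (n : ℚ))
        - ((n : ℚ) - 2) * X₃ / ((n : ℚ) * ((n : ℚ) - 1))) := by
  
  obtain ⟨m, rfl⟩ : ∃ m, n = m + 2 := ⟨n - 2, by omega⟩
  have hm := aux_main m lam p q hp hq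
  have e : ∑ π ∈ conjClass (m+2) lam,
      ((((Finset.univ : Finset (Fin (m+2))).filter fun k : Fin (m+2) =>
          1 < (k : ℕ) ∧ π ⟨1, by omega⟩ < π ⟨0, by omega⟩ ∧
          π ⟨0, by omega⟩ < π k).card : ℚ))
      = ∑ a : Fin (m+2), ∑ b : Fin (m+2),
      (if b < a then ((m:ℚ) + 1 - (a:ℕ)) else 0) * auxN lam 0 1 a b := by
    refine (Finset.sum_congr rfl fun π _ => aux_f m π).trans ?_
    rw [Finset.sum_comm]
    refine Finset.sum_congr rfl fun a _ => ?_
    rw [Finset.sum_comm]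
    refine Finset.sum_congr rfl fun b _ => ?_
    rw [auxN, Finset.mul_sum]
  rw [e]
  have h2 : ((m:ℚ) + 2) ≠ 0 := by positivity
  have h1 : ((m:ℚ) + 1) ≠ 0 := by positivity
  have h3 : ((m:ℚ) + 2 - 1) ≠ 0 := by
    have : ((m:ℚ) + 2 - 1) = m + 1 := by ring
    rw [this]; exact h1
  apply mul_left_cancel₀ (mul_ne_zero h2 h1)
  rw [hm, hX1, hX2, hX3]
  push_cast
  field_simp
  ring
end

section
/- Let n ≥ 3 and let λ be a partition of n. Then Σ_{π ∈ C_λ} peak(π) = |C_λ| · ( (n−2)/3 − (X₁ + X₂ + X₃ + X₄)/(n(n−1)) ), where peak(π) = #{i : 2 ≤ i ≤ n−1, π(i−1) < π(i) and π(i) > π(i+1)} is the number of peaks of π. -/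
open Equiv Finset

lemma conj_mem {n : ℕ} {lam : n.Partition} (σ π : Perm (Fin n)) :
    σ * π * σ⁻¹ ∈ conjClass n lam ↔ π ∈ conjClass n lam := by
  have : (σ * π * σ⁻¹).partition = π.partition :=
    (Perm.partition_eq_of_isConj.1 (isConj_iff.2 ⟨σ, rfl⟩)).symm
  simp [conjClass, this]

lemma sum_conj {n : ℕ} {lam : n.Partition} {M : Type*} [AddCommMonoid M]
    (σ : Perm (Fin n)) (f : Perm (Fin n) → M) :
    ∑ π ∈ conjClass n lam, f (σ * π * σ⁻¹) = ∑ π ∈ conjClass n lam, f π := by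
  refine Finset.sum_equiv (MulAut.conj σ).toEquiv ?_ ?_
  · intro π; simp [conj_mem]
  · intro π _; simp

lemma double_count {n : ℕ} {lam : n.Partition} (P : Perm (Fin n) → (Fin 3 ↪ Fin n) → Prop)
    [∀ π e, Decidable (P π e)]
    (hP : ∀ σ π e, P (σ * π * σ⁻¹) (e.trans σ.toEmbedding) ↔ P π e) (m : ℕ)
    (hm : ∀ π ∈ conjClass n lam, #{e | P π e} = m) (e₀ : Fin 3 ↪ Fin n) :
    #{π ∈ conjClass n lam | P π e₀} * n.descFactorial 3 = #(conjClass n lam) * m := by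
  have h1 : ∀ e, #{π ∈ conjClass n lam | P π e} = #{π ∈ conjClass n lam | P π e₀} := by
    intro e
    obtain ⟨σ, hσ⟩ : ∃ σ : Perm (Fin n), e₀.trans σ.toEmbedding = e := by
      obtain ⟨σ, hσ⟩ := Equiv.Perm.exists_smul_eq_embedding e₀ e
      exact ⟨σ, hσ⟩
    rw [card_filter, card_filter, ← sum_conj σ]
    refine sum_congr rfl fun π _ => ?_
    rw [← hσ]; simp only [hP]
  have h2 : ∑ e : Fin 3 ↪ Fin n, #{π ∈ conjClass n lam | P π e}
      = ∑ π ∈ conjClass n lam, #{e | P π e} := by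
    simp only [card_filter]; exact sum_comm
  rw [sum_congr rfl fun e _ => h1 e, sum_congr rfl hm] at h2
  simpa [Fintype.card_embedding_eq, mul_comm] using h2

lemma count_fix {n : ℕ} {lam : n.Partition} (π : Perm (Fin n)) (h : π ∈ conjClass n lam) :
    #{e : Fin 3 ↪ Fin n | π (e 0) = e 0 ∧ π (e 1) = e 1 ∧ π (e 2) = e 2}
      = (lam.parts.count 1).descFactorial 3 := by
  have hc : lam.parts.count 1 = Fintype.card {x // π x = x} := by
    simp only [conjClass, mem_filter, mem_univ, true_and] at h
    rw [← h, Perm.parts_partition, Multiset.count_add, Multiset.count_replicate_self,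
      Multiset.count_eq_zero.2 (fun h => by simpa using Perm.one_lt_of_mem_cycleType h), zero_add,
      Fintype.card_subtype, ← Finset.card_compl]
    congr 1; ext x; simp
  have : Fintype.card (Fin 3 ↪ {x // π x = x}) = (lam.parts.count 1).descFactorial 3 := by
    simp [Fintype.card_embedding_eq, hc]
  rw [← this, ← Fintype.card_subtype]
  refine Fintype.card_congr
    { toFun := fun e => ⟨fun t => ⟨e.1 t, ?_⟩, fun a b hab => e.1.injective (by simpa using hab)⟩
      invFun := fun e => ⟨e.trans (Function.Embedding.subtype _), (e 0).2, (e 1).2, (e 2).2⟩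
      left_inv := fun e => by ext; rfl
      right_inv := fun e => by ext; rfl }
  obtain ⟨e, h0, h1, h2⟩ := e
  fin_cases t
  exacts [h0, h1, h2]

lemma count_three {n : ℕ} {lam : n.Partition} (π : Perm (Fin n)) (h : π ∈ conjClass n lam) :
    #{x : Fin n | π x ≠ x ∧ π (π (π x)) = x} = 3 * lam.parts.count 3 := by
  have hc : lam.parts.count 3 = #{c ∈ π.cycleFactorsFinset | #c.support = 3} := by
    simp only [conjClass, mem_filter, mem_univ, true_and] at h
    rw [← h, Perm.parts_partition, Multiset.count_add, Multiset.count_replicate,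
      if_neg (by decide), add_zero, Perm.cycleType_def, Multiset.count_map]
    simp only [Finset.card, Finset.filter_val, Function.comp_apply]
    congr 1
    exact Multiset.filter_congr fun _ _ => eq_comm
  have hT : ({x : Fin n | π x ≠ x ∧ π (π (π x)) = x} : Finset _)
      = ({c ∈ π.cycleFactorsFinset | #c.support = 3} : Finset _).biUnion Perm.support := by
    ext x
    simp only [mem_filter, mem_univ, true_and, mem_biUnion]
    have hp : ∀ c ∈ π.cycleFactorsFinset, x ∈ c.support →
        (π x ≠ x ∧ (π (π (π x)) = x ↔ #c.support = 3)) := by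
      intro c hc hx
      have hcc := (Perm.mem_cycleFactorsFinset_iff.1 hc).1
      have hce := Perm.cycle_is_cycleOf hx hc
      have hx' := Perm.mem_support.1 hx
      have e3 : π (π (π x)) = (c ^ 3) x := by
        rw [hce, Perm.cycleOf_pow_apply_self]; rfl
      refine ⟨?_, ?_⟩
      · rwa [(Perm.mem_cycleFactorsFinset_iff.1 hc).2 x hx] at hx'
      rw [e3, ← hcc.orderOf]
      constructor
      · intro h3
        have := orderOf_dvd_of_pow_eq_one (hcc.pow_eq_one_iff.2 ⟨x, hx', h3⟩)
        rcases (Nat.dvd_prime Nat.prime_three).1 this with h | h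
        · rw [orderOf_eq_one_iff] at h; exact absurd h hcc.ne_one
        · exact h
      · intro h3
        rw [← h3, pow_orderOf_eq_one]; rfl
    constructor
    · rintro ⟨h1, h2⟩
      have hm := Perm.cycleOf_mem_cycleFactorsFinset_iff.2 (Perm.mem_support.2 h1)
      have hs : x ∈ (π.cycleOf x).support := by
        simpa [Perm.mem_support_cycleOf_iff] using h1
      exact ⟨_, ⟨hm, (hp _ hm hs).2.1 h2⟩, hs⟩
    · rintro ⟨c, ⟨hc, h3⟩, hx⟩
      exact ⟨(hp c hc hx).1, (hp c hc hx).2.2 h3⟩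
  rw [hT, card_biUnion, hc, sum_congr rfl (fun c hc => (mem_filter.1 hc).2)]
  · simp [mul_comm]
  · intro c hc d hd hcd
    exact (Perm.cycleFactorsFinset_pairwise_disjoint π (mem_filter.1 hc).1
      (mem_filter.1 hd).1 hcd).disjoint_support

lemma count_cyc {n : ℕ} {lam : n.Partition} (π : Perm (Fin n)) (h : π ∈ conjClass n lam) :
    #{e : Fin 3 ↪ Fin n | π (e 0) = e 1 ∧ π (e 1) = e 2 ∧ π (e 2) = e 0}
      = 3 * lam.parts.count 3 := by
  rw [← count_three π h]
  refine Finset.card_bij (fun e _ => e 0) ?_ ?_ ?_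
  · intro e he
    simp only [mem_filter, mem_univ, true_and] at he ⊢
    obtain ⟨h0, h1, h2⟩ := he
    rw [h0, h1, h2]
    exact ⟨fun h => by simpa using e.injective h, rfl⟩
  · intro e he f hf hef
    simp only [mem_filter, mem_univ, true_and] at he hf
    ext t
    fin_cases t
    · simp [hef]
    · simp [← he.1, ← hf.1, hef]
    · simp [← he.1, ← hf.1, ← he.2.1, ← hf.2.1, hef]
  · intro x hx
    simp only [mem_filter, mem_univ, true_and] at hx
    obtain ⟨h1, h2⟩ := hx
    have h3 : π (π x) ≠ π x := fun h => h1 (π.injective h)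
    have h4 : π (π x) ≠ x := fun h => h1 (by rw [h] at h2; exact h2)
    refine ⟨⟨![x, π x, π (π x)], ?_⟩, ?_, rfl⟩
    · intro a b
      fin_cases a <;> fin_cases b <;> simp [h1, h3, h4, h1.symm, h3.symm, h4.symm]
    · simp only [mem_filter, mem_univ, true_and]
      exact ⟨rfl, rfl, h2⟩
def GG {n : ℕ} (i j k a b c : Fin n) : ℤ :=
  (if a < b ∧ c < b then 6 else 0) - 2 + (if a = i ∧ b = j ∧ c = k then 2 else 0)
    - (if a = j ∧ b = k ∧ c = i then 1 else 0) - (if a = k ∧ b = i ∧ c = j then 1 else 0)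

def tt {n : ℕ} (i j k i' j' k' v : Fin n) : Fin n :=
  if v = i then i' else if v = j then j' else if v = k then k' else v

set_option maxHeartbeats 4000000 in
lemma GG_sum {n : ℕ} (i j k a b c : Fin n) (hij : (i : ℕ) + 1 = j) (hjk : (j : ℕ) + 1 = k)
    (hab : a ≠ b) (hac : a ≠ c) (hbc : b ≠ c) :
    GG i j k a b c
    + GG i j k (tt i j k j i k b) (tt i j k j i k a) (tt i j k j i k c)
    + GG i j k (tt i j k i k j a) (tt i j k i k j c) (tt i j k i k j b)
    + GG i j k (tt i j k k j i c) (tt i j k k j i b) (tt i j k k j i a)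
    + GG i j k (tt i j k j k i c) (tt i j k j k i a) (tt i j k j k i b)
    + GG i j k (tt i j k k i j b) (tt i j k k i j c) (tt i j k k i j a) = 0 := by
  have h1 : i < j := by rw [Fin.lt_def]; omega
  have h2 : j < k := by rw [Fin.lt_def]; omega
  have h3 : i < k := h1.trans h2
  have key : ∀ v : Fin n, v = i ∨ v = j ∨ v = k ∨ (v < i ∧ v < j ∧ v < k) ∨ (i < v ∧ j < v ∧ k < v) := by
    intro v; simp only [Fin.ext_iff, Fin.lt_def]; omega
  rcases key a with rfl | rfl | rfl | ⟨a1, a2, a3⟩ | ⟨a1, a2, a3⟩ <;>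
  rcases key b with rfl | rfl | rfl | ⟨b1, b2, b3⟩ | ⟨b1, b2, b3⟩ <;>
  first
  | exact absurd rfl hab
  | (rcases key c with rfl | rfl | rfl | ⟨c1, c2, c3⟩ | ⟨c1, c2, c3⟩ <;>
    first
    | exact absurd rfl hac
    | exact absurd rfl hbc
    | (simp [GG, tt, *, ne_of_lt, ne_of_gt, not_lt_of_gt] <;>
       rcases lt_or_gt_of_ne hab with u | u <;> rcases lt_or_gt_of_ne hac with v | v <;>
       rcases lt_or_gt_of_ne hbc with w | w <;>
       first
       | (exfalso; order)
       | (simp [u, v, w, not_lt_of_gt])))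

lemma GG_conj_sum {n : ℕ} {lam : n.Partition} (i j k : Fin n) (hij : (i : ℕ) + 1 = j)
    (hjk : (j : ℕ) + 1 = k) :
    ∑ π ∈ conjClass n lam, GG i j k (π i) (π j) (π k) = 0 := by
  have h1 : i ≠ j := by rw [Ne, Fin.ext_iff]; omega
  have h2 : j ≠ k := by rw [Ne, Fin.ext_iff]; omega
  have h3 : i ≠ k := by rw [Ne, Fin.ext_iff]; omega
  have key := fun τ : Perm (Fin n) =>
    sum_conj (lam := lam) τ (fun π => GG i j k (π i) (π j) (π k))
  have t1 : ∀ v, swap i j v = tt i j k j i k v := by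
    intro v; simp only [swap_apply_def, tt]; split_ifs <;> simp_all
  have t2 : ∀ v, swap j k v = tt i j k i k j v := by
    intro v; simp only [swap_apply_def, tt]; split_ifs <;> simp_all
  have t3 : ∀ v, swap i k v = tt i j k k j i v := by
    intro v; simp only [swap_apply_def, tt]; split_ifs <;> simp_all
  have t4 : ∀ v, swap i j (swap j k v) = tt i j k j k i v := by
    intro v; simp only [swap_apply_def, tt]; split_ifs <;> simp_all
  have t5 : ∀ v, swap j k (swap i j v) = tt i j k k i j v := by
    intro v; simp only [swap_apply_def, tt]; split_ifs <;> simp_all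
  have k1 := key (swap i j)
  have k2 := key (swap j k)
  have k3 := key (swap i k)
  have k4 := key (swap i j * swap j k)
  have k5 := key (swap j k * swap i j)
  simp only [mul_inv_rev, swap_inv, Perm.mul_apply, swap_apply_left, swap_apply_right,
    swap_apply_of_ne_of_ne h1 h3, swap_apply_of_ne_of_ne h1.symm h2,
    swap_apply_of_ne_of_ne h3.symm h2.symm] at k1 k2 k3 k4 k5
  simp only [t4] at k4
  simp only [t5] at k5
  simp only [t1] at k1
  simp only [t2] at k2
  simp only [t3] at k3
  have tot := Finset.sum_eq_zero (s := conjClass n lam) fun π _ =>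
    GG_sum i j k (π i) (π j) (π k) hij hjk (π.injective.ne h1) (π.injective.ne h3)
      (π.injective.ne h2)
  simp only [Finset.sum_add_distrib] at tot
  linarith

lemma local_peak {n : ℕ} {lam : n.Partition} (i j k : Fin n) (hij : (i : ℕ) + 1 = j)
    (hjk : (j : ℕ) + 1 = k) :
    (6 : ℚ) * #{π ∈ conjClass n lam | π i < π j ∧ π k < π j} * n.descFactorial 3 =
      #(conjClass n lam) * (2 * n.descFactorial 3 - 2 * (lam.parts.count 1).descFactorial 3
        + 6 * lam.parts.count 3) := by
  have h1 : i ≠ j := by rw [Ne, Fin.ext_iff]; omega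
  have h2 : j ≠ k := by rw [Ne, Fin.ext_iff]; omega
  have h3 : i ≠ k := by rw [Ne, Fin.ext_iff]; omega
  have hs := GG_conj_sum (lam := lam) i j k hij hjk
  let e : Fin 3 ↪ Fin n := ⟨![i, j, k], by
    intro a b
    fin_cases a <;> fin_cases b <;> simp [h1, h2, h3, h1.symm, h2.symm, h3.symm]⟩
  let e' : Fin 3 ↪ Fin n := ⟨![i, k, j], by
    intro a b
    fin_cases a <;> fin_cases b <;> simp [h1, h2, h3, h1.symm, h2.symm, h3.symm]⟩
  have c1 := double_count (lam := lam)
    (fun π (e : Fin 3 ↪ Fin n) => π (e 0) = e 0 ∧ π (e 1) = e 1 ∧ π (e 2) = e 2)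
    (by intro σ π e; simp) _ count_fix e
  have c2 := double_count (lam := lam)
    (fun π (e : Fin 3 ↪ Fin n) => π (e 0) = e 1 ∧ π (e 1) = e 2 ∧ π (e 2) = e 0)
    (by intro σ π e; simp) _ count_cyc e
  have c3 := double_count (lam := lam)
    (fun π (e : Fin 3 ↪ Fin n) => π (e 0) = e 1 ∧ π (e 1) = e 2 ∧ π (e 2) = e 0)
    (by intro σ π e; simp) _ count_cyc e'
  change #{π ∈ conjClass n lam | π i = i ∧ π j = j ∧ π k = k} * _ = _ at c1
  change #{π ∈ conjClass n lam | π i = j ∧ π j = k ∧ π k = i} * _ = _ at c2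
  change #{π ∈ conjClass n lam | π i = k ∧ π k = j ∧ π j = i} * _ = _ at c3
  have c4 : #{π ∈ conjClass n lam | π i = k ∧ π k = j ∧ π j = i}
    = #{π ∈ conjClass n lam | π i = k ∧ π j = i ∧ π k = j} := by
    congr 1; ext π; simp only [mem_filter]; tauto
  rw [c4] at c3
  have hs' : (6 : ℚ) * #{π ∈ conjClass n lam | π i < π j ∧ π k < π j} - 2 * #(conjClass n lam)
      + 2 * #{π ∈ conjClass n lam | π i = i ∧ π j = j ∧ π k = k}
      - #{π ∈ conjClass n lam | π i = j ∧ π j = k ∧ π k = i}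
      - #{π ∈ conjClass n lam | π i = k ∧ π j = i ∧ π k = j} = 0 := by
    have : (6 : ℤ) * #{π ∈ conjClass n lam | π i < π j ∧ π k < π j} - 2 * #(conjClass n lam)
      + 2 * #{π ∈ conjClass n lam | π i = i ∧ π j = j ∧ π k = k}
      - #{π ∈ conjClass n lam | π i = j ∧ π j = k ∧ π k = i}
      - #{π ∈ conjClass n lam | π i = k ∧ π j = i ∧ π k = j} = 0 := by
      rw [← hs]
      simp only [GG, sum_sub_distrib, sum_add_distrib, ← sum_filter, sum_const, nsmul_eq_mul]
      ring
    exact_mod_cast this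
  have d1 : (_ : ℚ) = _ := congrArg (Nat.cast : ℕ → ℚ) c1
  have d2 : (_ : ℚ) = _ := congrArg (Nat.cast : ℕ → ℚ) c2
  have d3 : (_ : ℚ) = _ := congrArg (Nat.cast : ℕ → ℚ) c3
  push_cast at d1 d2 d3
  linear_combination (n.descFactorial 3 : ℚ) * hs' - 2 * d1 + d2 + d3

lemma cast_desc (m : ℕ) : ((m.descFactorial 3 : ℕ) : ℚ) = m * (m - 1) * (m - 2) := by
  rcases m with _ | _ | m
  · simp
  · simp
  · simp [Nat.descFactorial]; ring

lemma card_consec (n : ℕ) (hn : 3 ≤ n) :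
    #{x : Fin n × Fin n × Fin n | (x.1 : ℕ) + 1 = (x.2.1 : ℕ) ∧ (x.2.1 : ℕ) + 1 = (x.2.2 : ℕ)}
      = n - 2 := by
  rw [← Finset.card_range (n - 2)]
  refine Finset.card_bij (fun x _ => (x.1 : ℕ)) ?_ ?_ ?_
  · intro x hx
    simp only [mem_filter, mem_univ, true_and, Finset.mem_range] at hx ⊢
    have := x.2.2.2
    omega
  · intro x hx y hy hxy
    simp only [mem_filter, mem_univ, true_and] at hx hy hxy
    simp only [Prod.ext_iff, Fin.ext_iff]
    omega
  · intro m hm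
    rw [Finset.mem_range] at hm
    exact ⟨(⟨m, by omega⟩, ⟨m + 1, by omega⟩, ⟨m + 2, by omega⟩), by simp, rfl⟩

theorem stmt18 (n : ℕ) (hn : 3 ≤ n) (lam : n.Partition)
    (p q r X₁ X₂ X₃ X₄ : ℚ)
    (hp : p = (lam.parts.count 1 : ℚ)) (hq : q = (lam.parts.count 2 : ℚ))
    (hr : r = (lam.parts.count 3 : ℚ))
    (hX1 : X₁ = p - 1) (hX2 : X₂ = (p - 1) * (p - 2) / 2 + q - 1)
    (hX3 : X₃ = (p - 1) * (p - 2) / 2 - q)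
    (hX4 : X₄ = (p - 1) * (p - 2) * (p - 3) / 3 - p - r + 2) :
    (∑ π ∈ conjClass n lam,
      ((((Finset.univ : Finset (Fin n × Fin n × Fin n)).filter fun x =>
          (x.1 : ℕ) + 1 = (x.2.1 : ℕ) ∧ (x.2.1 : ℕ) + 1 = (x.2.2 : ℕ) ∧ π x.1 < π x.2.1 ∧ π x.2.2 < π x.2.1).card : ℚ)))
    = ((conjClass n lam).card : ℚ) *
      (((n : ℚ) - 2) / 3 - (X₁ + X₂ + X₃ + X₄) / ((n : ℚ) * ((n : ℚ) - 1))) := by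
  have hn' : (3 : ℚ) ≤ n := by exact_mod_cast hn
  have n0 : (n : ℚ) ≠ 0 := by linarith
  have n1 : (n : ℚ) - 1 ≠ 0 := by linarith
  have n2 : (n : ℚ) - 2 ≠ 0 := by linarith
  have swap_sum : (∑ π ∈ conjClass n lam,
      ((((Finset.univ : Finset (Fin n × Fin n × Fin n)).filter fun x =>
          (x.1 : ℕ) + 1 = (x.2.1 : ℕ) ∧ (x.2.1 : ℕ) + 1 = (x.2.2 : ℕ) ∧ π x.1 < π x.2.1 ∧ π x.2.2 < π x.2.1).card : ℚ)))
      = ∑ x ∈ ({x : Fin n × Fin n × Fin n | (x.1 : ℕ) + 1 = (x.2.1 : ℕ) ∧ (x.2.1 : ℕ) + 1 = (x.2.2 : ℕ)} : Finset _),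
        (#{π ∈ conjClass n lam | π x.1 < π x.2.1 ∧ π x.2.2 < π x.2.1} : ℚ) := by
    simp only [← and_assoc, Finset.card_filter]
    push_cast
    rw [sum_filter, sum_comm' (t' := univ) (s' := fun _ => conjClass n lam) (by simp)]
    refine sum_congr rfl fun x _ => ?_
    by_cases hx : (x.1 : ℕ) + 1 = (x.2.1 : ℕ) ∧ (x.2.1 : ℕ) + 1 = (x.2.2 : ℕ)
    · simp [hx]
    · rw [if_neg hx]
      refine sum_eq_zero fun π _ => ?_
      rw [if_neg]; tauto
  have hx : ∀ x ∈ ({x : Fin n × Fin n × Fin n | (x.1 : ℕ) + 1 = (x.2.1 : ℕ) ∧ (x.2.1 : ℕ) + 1 = (x.2.2 : ℕ)} : Finset _),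
        (#{π ∈ conjClass n lam | π x.1 < π x.2.1 ∧ π x.2.2 < π x.2.1} : ℚ)
        = #(conjClass n lam) * (1 / 3 - (p * (p - 1) * (p - 2) / 3 - r) / (n * (n - 1) * (n - 2))) := by
    intro x hx
    simp only [mem_filter, mem_univ, true_and] at hx
    have := local_peak (lam := lam) x.1 x.2.1 x.2.2 hx.1 hx.2
    rw [cast_desc, cast_desc, ← hp, ← hr] at this
    field_simp
    linear_combination this / 2
  rw [swap_sum, sum_congr rfl hx, sum_const, card_consec n hn, nsmul_eq_mul,
    Nat.cast_sub (by omega), hX1, hX2, hX3, hX4]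
  push_cast
  field_simp
  ring
end
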